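/- arXiv:2208.00236 — 2 statements merged into one kernel-verified Lean document; each statement's English description precedes it below -/
import Mathlib

section
/- Let N ≥ 2, 0 < α < N and p > (N+α)/N. There exists a constant C > 0, depending only on N, α, p and the growth and kernel constants (in particular not on λ), such that for every u ∈ E_λ: (i) Σ_G (R_α ∗ |u|^p)(x)|u(x)|^p ≤ C‖u‖_{2Np/(N+α)}^{2p} ≤ C‖u‖_{E_λ}^{2p}, and (ii) ‖R_α ∗ |u|^p‖_{2N/(N−α)} ≤ C‖u‖_{2Np/(N+α)}^{p}. -/
open scoped BigOperators ENNReal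
open Filter

noncomputable section

namespace Choquard

variable {G : Type*}

/-- The word metric on a group with generating set `S`. -/
def wordDist [Group G] (S : Finset G) (x y : G) : ℕ :=
  sInf {k : ℕ | ∃ l : List G, (∀ g ∈ l, g ∈ S) ∧ l.length = k ∧ x⁻¹ * y = l.prod}

/-- The closed ball of radius `r` about `c` in the word metric. -/
def ball [Group G] (S : Finset G) (c : G) (r : ℝ) : Set G :=
  {x | (wordDist S x c : ℝ) ≤ r}

/-- Polynomial growth of homogeneous dimension `N`. -/
def PolyGrowth [Group G] (S : Finset G) (N : ℕ) : Prop :=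
  ∃ C₁ C₂ : ℝ, 0 < C₁ ∧ 0 < C₂ ∧ ∀ r : ℝ, 1 ≤ r →
    C₁ * r ^ N ≤ ((ball S (1 : G) r).ncard : ℝ) ∧
    ((ball S (1 : G) r).ncard : ℝ) ≤ C₂ * r ^ N

/-- Riesz-type asymptotics for the kernel `R`. -/
def RieszKernel [Group G] (S : Finset G) (N : ℕ) (α : ℝ) (R : G → G → ℝ) : Prop :=
  (∀ x y, 0 < R x y) ∧
  ∃ c₁ c₂ : ℝ, 0 < c₁ ∧ 0 < c₂ ∧ ∀ x y : G, x ≠ y →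
    c₁ * (wordDist S x y : ℝ) ^ (α - (N : ℝ)) ≤ R x y ∧
    R x y ≤ c₂ * (wordDist S x y : ℝ) ^ (α - (N : ℝ))

/-- Convolution `(R ∗ f)(x) = Σ_{y ≠ x} R x y f y`. -/
def conv [DecidableEq G] (R : G → G → ℝ) (f : G → ℝ) (x : G) : ℝ :=
  ∑' y, if y = x then 0 else R x y * f y

/-- The convolution as an extended-nonnegative-real valued sum. -/
def convE [DecidableEq G] (R : G → G → ℝ) (f : G → ℝ) (x : G) : ℝ≥0∞ :=
  ∑' y, if y = x then 0 else ENNReal.ofReal (R x y * f y)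

/-- Membership in `ℓ^q(G)`. -/
def Memlp (q : ℝ) (u : G → ℝ) : Prop := Summable fun x => |u x| ^ q

/-- The `ℓ^q` norm. -/
def lpNorm (q : ℝ) (u : G → ℝ) : ℝ := (∑' x, |u x| ^ q) ^ (1 / q)

/-- The `ℓ^∞` norm. -/
def supNorm (u : G → ℝ) : ℝ := ⨆ x, |u x|

/-- The graph Laplacian `Δu(x) = Σ_{s ∈ S} (u(xs) - u(x))`. -/
def lap [Group G] (S : Finset G) (u : G → ℝ) (x : G) : ℝ :=
  ∑ s ∈ S, (u (x * s) - u x)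

/-- The gradient form `∇u∇v(x) = (1/2) Σ_{s ∈ S} (u(xs)-u(x))(v(xs)-v(x))`. -/
def grad [Group G] (S : Finset G) (u v : G → ℝ) (x : G) : ℝ :=
  (1 / 2) * ∑ s ∈ S, (u (x * s) - u x) * (v (x * s) - v x)

/-- The density `|Δu|² + |∇u|² + (1 + λa)u²`. -/
def eDensity [Group G] (S : Finset G) (a : G → ℝ) (lam : ℝ) (u : G → ℝ) (x : G) : ℝ :=
  (lap S u x) ^ 2 + grad S u u x + (1 + lam * a x) * (u x) ^ 2

/-- Membership in the space `E_λ`. -/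
def MemE [Group G] (S : Finset G) (a : G → ℝ) (lam : ℝ) (u : G → ℝ) : Prop :=
  Summable (eDensity S a lam u)

/-- `‖u‖²_{E_λ}`. -/
def normEsq [Group G] (S : Finset G) (a : G → ℝ) (lam : ℝ) (u : G → ℝ) : ℝ :=
  ∑' x, eDensity S a lam u x

/-- `‖u‖_{E_λ}`. -/
def normE [Group G] (S : Finset G) (a : G → ℝ) (lam : ℝ) (u : G → ℝ) : ℝ :=
  Real.sqrt (normEsq S a lam u)

/-- The inner product `⟨u, v⟩_{E_λ}`. -/
def innerE [Group G] (S : Finset G) (a : G → ℝ) (lam : ℝ) (u v : G → ℝ) : ℝ :=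
  ∑' x, (lap S u x * lap S v x + grad S u v x + (1 + lam * a x) * (u x * v x))

/-- The nonlocal term `Σ_G (R_α ∗ |u|^p)|u|^p`. -/
def Dterm [DecidableEq G] (R : G → G → ℝ) (p : ℝ) (u : G → ℝ) : ℝ :=
  ∑' x, conv R (fun y => |u y| ^ p) x * |u x| ^ p

/-- The nonlocal pairing `Σ_G (R_α ∗ |u|^p)|u|^{p-2} u v`. -/
def Kterm [DecidableEq G] (R : G → G → ℝ) (p : ℝ) (u v : G → ℝ) : ℝ :=
  ∑' x, conv R (fun y => |u y| ^ p) x * (|u x| ^ (p - 2) * u x * v x)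

/-- The energy functional `J_λ`. -/
def Jfun [Group G] [DecidableEq G] (S : Finset G) (a : G → ℝ) (lam : ℝ)
    (R : G → G → ℝ) (p : ℝ) (u : G → ℝ) : ℝ :=
  (1 / 2) * normEsq S a lam u - (1 / (2 * p)) * Dterm R p u

/-- The derivative pairing `(J'_λ(u), v)`. -/
def Jd [Group G] [DecidableEq G] (S : Finset G) (a : G → ℝ) (lam : ℝ)
    (R : G → G → ℝ) (p : ℝ) (u v : G → ℝ) : ℝ :=
  innerE S a lam u v - Kterm R p u v

/-- The Nehari manifold `N_λ`. -/
def nehari [Group G] [DecidableEq G] (S : Finset G) (a : G → ℝ) (lam : ℝ)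
    (R : G → G → ℝ) (p : ℝ) : Set (G → ℝ) :=
  {u | MemE S a lam u ∧ u ≠ 0 ∧ Jd S a lam R p u u = 0}

/-- `m_λ = inf_{N_λ} J_λ`. -/
def mlam [Group G] [DecidableEq G] (S : Finset G) (a : G → ℝ) (lam : ℝ)
    (R : G → G → ℝ) (p : ℝ) : ℝ :=
  sInf (Jfun S a lam R p '' nehari S a lam R p)

/-- The norm of `J'_λ(u)` in the dual space `E_λ*`. -/
def dualNorm [Group G] [DecidableEq G] (S : Finset G) (a : G → ℝ) (lam : ℝ)
    (R : G → G → ℝ) (p : ℝ) (u : G → ℝ) : ℝ :=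
  sSup {t : ℝ | ∃ v, MemE S a lam v ∧ normEsq S a lam v ≤ 1 ∧ t = |Jd S a lam R p u v|}

/-- `(PS)_c` sequence for `J_λ`. -/
def PSseq [Group G] [DecidableEq G] (S : Finset G) (a : G → ℝ) (lam : ℝ)
    (R : G → G → ℝ) (p : ℝ) (c : ℝ) (U : ℕ → G → ℝ) : Prop :=
  (∀ n, MemE S a lam (U n)) ∧
  Tendsto (fun n => Jfun S a lam R p (U n)) atTop (nhds c) ∧
  Tendsto (fun n => dualNorm S a lam R p (U n)) atTop (nhds 0)

/-- The Cayley graph of `(G, S)`. -/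
def cayley [Group G] (S : Finset G) : SimpleGraph G :=
  SimpleGraph.fromRel (fun x y => x⁻¹ * y ∈ S)

/-- Condition (A₁): the potential well `Ω = {a = 0}` is nonempty, finite and connected. -/
def CondA1 [Group G] (S : Finset G) (a : G → ℝ) : Prop :=
  {x | a x = 0}.Nonempty ∧ {x | a x = 0}.Finite ∧
  ((cayley S).induce {x | a x = 0}).Connected

/-- Condition (A₂): some sublevel set `{a ≤ M}` is finite and nonempty. -/
def CondA2 (a : G → ℝ) : Prop :=
  ∃ M : ℝ, 0 < M ∧ {x | a x ≤ M}.Finite ∧ {x | a x ≤ M}.Nonempty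

/-- The density `|Δu|² + |∇u|² + u²` of the `W^{2,2}` norm. -/
def wDensity [Group G] (S : Finset G) (u : G → ℝ) (x : G) : ℝ :=
  (lap S u x) ^ 2 + grad S u u x + (u x) ^ 2

/-- Membership in `W^{2,2}(G)`. -/
def MemW [Group G] (S : Finset G) (u : G → ℝ) : Prop := Summable (wDensity S u)

/-- `‖u‖²_{W^{2,2}}`. -/
def normWsq [Group G] (S : Finset G) (u : G → ℝ) : ℝ := ∑' x, wDensity S u x

/-- Membership in `E(Ω)`: vanishing outside `Ω`. -/
def MemEOm (Ω : Set G) (u : G → ℝ) : Prop := ∀ x ∉ Ω, u x = 0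

/-- `‖u‖²_{E(Ω)}`. -/
def normOmSq [Group G] (S : Finset G) (Ω : Set G) (u : G → ℝ) : ℝ :=
  (∑' x, ((lap S u x) ^ 2 + grad S u u x)) + ∑' x : Ω, (u (x : G)) ^ 2

/-- The nonlocal term over `Ω`. -/
def DtermOm [DecidableEq G] (Ω : Set G) (R : G → G → ℝ) (p : ℝ) (u : G → ℝ) : ℝ :=
  ∑' x : Ω, conv R (fun y => |u y| ^ p) (x : G) * |u (x : G)| ^ p

/-- The limiting energy functional `J_Ω`. -/
def JOm [Group G] [DecidableEq G] (S : Finset G) (Ω : Set G) (R : G → G → ℝ) (p : ℝ)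
    (u : G → ℝ) : ℝ :=
  (1 / 2) * normOmSq S Ω u - (1 / (2 * p)) * DtermOm Ω R p u

/-- The derivative pairing `(J'_Ω(u), v)`. -/
def JdOm [Group G] [DecidableEq G] (S : Finset G) (Ω : Set G) (R : G → G → ℝ) (p : ℝ)
    (u v : G → ℝ) : ℝ :=
  (∑' x, (lap S u x * lap S v x + grad S u v x)) + (∑' x : Ω, u (x : G) * v (x : G))
    - ∑' x : Ω, conv R (fun y => |u y| ^ p) (x : G) * (|u (x : G)| ^ (p - 2) * u (x : G) * v (x : G))

/-- The Nehari manifold `N_Ω`. -/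
def nehariOm [Group G] [DecidableEq G] (S : Finset G) (Ω : Set G) (R : G → G → ℝ)
    (p : ℝ) : Set (G → ℝ) :=
  {u | MemEOm Ω u ∧ u ≠ 0 ∧ JdOm S Ω R p u u = 0}

/-- `m_Ω = inf_{N_Ω} J_Ω`. -/
def mOm [Group G] [DecidableEq G] (S : Finset G) (Ω : Set G) (R : G → G → ℝ) (p : ℝ) : ℝ :=
  sInf (JOm S Ω R p '' nehariOm S Ω R p)

/-!
On a group of homogeneous dimension `N`, a kernel of size `d(x, y)^(α - N)` has mass at most
`K * |A|^(α/N)` on every finite set `A`: dyadic shells bound the mass of the ball with about `|A|`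
elements, and outside that ball the kernel is at most `K * |A|^(α/N - 1)`.

This section bound alone implies the Hardy-Littlewood-Sobolev inequality. Let `f` and `g` lie in the
unit balls of `ℓ^p` and `ℓ^q`, with `1/p + 1/q = 1 + γ` and `γ = α/N`. The set `{t/2 < g ≤ t}` has
at most `(t/2)^(-q)` elements, so by summing over dyadic `t` one gets
`∑_{g(y) ≤ t} κ(x, y) g(y) ≲ t^(1 - qγ)`. At `t = f(x)^(p/q)`, multiplying by `f(x)` gives exactly
`f(x)^p`, which is summable. Hence the part of `∑ f(x) κ(x, y) g(y)` where `g(y) ≤ f(x)^(p/q)` is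
bounded, and so is, by symmetry, the part where `f(x) ≤ g(y)^(q/p)`. Duality in each variable turns
this into an operator bound, applied here with `f = g = |u|^p`. The energy norm enters through
`‖u‖_q ≤ ‖u‖_2 ≤ ‖u‖_{E_λ}` for `q ≥ 2`.
-/

section LpENorm

variable {X : Type*}

/-- The `ℓ^r` norm of an `ℝ≥0∞`-valued function, equal to `⊤` off `ℓ^r`. -/
def lpENorm (r : ℝ) (f : X → ℝ≥0∞) : ℝ≥0∞ := (∑' x, f x ^ r) ^ (1 / r)

lemma tsum_rpow_le_one_of_lpENorm_le_one {r : ℝ} (hr : 0 < r) {f : X → ℝ≥0∞}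
    (hf : lpENorm r f ≤ 1) : ∑' x, f x ^ r ≤ 1 := by
  rwa [lpENorm, one_div, ENNReal.rpow_inv_le_iff hr, ENNReal.one_rpow] at hf

lemma ne_top_of_tsum_rpow_le_one {r : ℝ} (hr : 0 < r) {f : X → ℝ≥0∞} (hf : ∑' x, f x ^ r ≤ 1)
    (x : X) : f x ≠ ⊤ := by
  intro hx
  simpa [hx, hr] using (ENNReal.le_tsum x).trans hf

lemma tsum_mul_le_lpENorm_mul_lpENorm {p q : ℝ} (hpq : p.HolderConjugate q) (f g : X → ℝ≥0∞) :
    ∑' x, f x * g x ≤ lpENorm p f * lpENorm q g := by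
  rw [ENNReal.tsum_eq_iSup_sum]
  refine iSup_le fun T => (ENNReal.inner_le_Lp_mul_Lq T f g hpq).trans ?_
  have := hpq.nonneg
  have := hpq.symm.nonneg
  unfold lpENorm
  gcongr <;> exact ENNReal.sum_le_tsum T

lemma lpENorm_le_of_sum_rpow_le {r : ℝ} (hr : 0 < r) {f : X → ℝ≥0∞} {B : ℝ≥0∞}
    (h : ∀ T : Finset X, (∑ x ∈ T, f x ^ r) ^ (1 / r) ≤ B) : lpENorm r f ≤ B := by
  simp only [lpENorm, one_div, ENNReal.rpow_inv_le_iff hr] at h ⊢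
  exact ENNReal.tsum_eq_iSup_sum.trans_le (iSup_le h)

lemma apply_le_of_forall_tsum_mul_le {p : ℝ} (hp : 0 < p) {h : X → ℝ≥0∞} {B : ℝ≥0∞}
    (H : ∀ f : X → ℝ≥0∞, lpENorm p f ≤ 1 → ∑' x, f x * h x ≤ B) (x : X) : h x ≤ B := by
  classical
  have hnorm : lpENorm p (Pi.single x 1 : X → ℝ≥0∞) ≤ 1 := by
    rw [lpENorm, tsum_eq_single x fun y hy => by simp [hy, hp]]
    simp
  calc h x = (Pi.single x 1 : X → ℝ≥0∞) x * h x := by simp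
    _ ≤ ∑' y, (Pi.single x 1 : X → ℝ≥0∞) y * h y := ENNReal.le_tsum x
    _ ≤ B := H _ hnorm

lemma exists_lpENorm_le_one_tsum_mul_eq {p q : ℝ} (hpq : p.HolderConjugate q) (h : X → NNReal)
    (T : Finset X) : ∃ f : X → ℝ≥0∞, lpENorm p f ≤ 1 ∧
      ∑' x, f x * h x = (∑ x ∈ T, (h x : ℝ≥0∞) ^ q) ^ (1 / q) := by
  classical
  obtain ⟨⟨f, hf, hfh⟩, -⟩ := NNReal.isGreatest_Lp T h hpq.symm
  refine ⟨(T : Set X).indicator fun x => (f x : ℝ≥0∞), ?_, ?_⟩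
  · rw [lpENorm, one_div, ENNReal.rpow_inv_le_iff hpq.pos, ENNReal.one_rpow]
    calc ∑' x, (T : Set X).indicator (fun x => (f x : ℝ≥0∞)) x ^ p
        = ∑ x ∈ T, (f x : ℝ≥0∞) ^ p := by
          rw [sum_eq_tsum_indicator]
          congr! 2 with x
          by_cases hx : x ∈ T <;> simp [hx, hpq.pos]
      _ = ((∑ x ∈ T, f x ^ p : NNReal) : ℝ≥0∞) := by
          push_cast
          exact Finset.sum_congr rfl fun x _ => (ENNReal.coe_rpow_of_nonneg _ hpq.nonneg).symm
      _ ≤ 1 := by exact_mod_cast hf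
  · calc ∑' x, (T : Set X).indicator (fun x => (f x : ℝ≥0∞)) x * h x
        = ∑ x ∈ T, (f x : ℝ≥0∞) * h x := by
          rw [sum_eq_tsum_indicator]
          exact tsum_congr fun x => (Set.indicator_mul_left (T : Set X)
            (fun x => (f x : ℝ≥0∞)) fun x => (h x : ℝ≥0∞)).symm
      _ = ((∑ x ∈ T, h x ^ q) ^ (1 / q) : NNReal) := by
          rw [← hfh]
          push_cast
          exact Finset.sum_congr rfl fun x _ => mul_comm _ _
      _ = (∑ x ∈ T, (h x : ℝ≥0∞) ^ q) ^ (1 / q) := by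
          rw [ENNReal.coe_rpow_of_nonneg _ hpq.symm.one_div_nonneg]
          push_cast
          congr! 2
          exact ENNReal.coe_rpow_of_nonneg _ hpq.symm.nonneg

lemma lpENorm_le_of_forall_tsum_mul_le {p q : ℝ} (hpq : p.HolderConjugate q) {h : X → ℝ≥0∞}
    {B : ℝ≥0∞} (H : ∀ f : X → ℝ≥0∞, lpENorm p f ≤ 1 → ∑' x, f x * h x ≤ B) :
    lpENorm q h ≤ B := by
  rcases eq_or_ne B ⊤ with rfl | hB
  · exact le_top
  lift h to X → NNReal using
    fun x => ne_top_of_le_ne_top hB (apply_le_of_forall_tsum_mul_le hpq.pos H x)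
  refine lpENorm_le_of_sum_rpow_le hpq.symm.pos fun T => ?_
  obtain ⟨f, hf, hfh⟩ := exists_lpENorm_le_one_tsum_mul_eq hpq h T
  exact hfh ▸ H f hf

end LpENorm

section DyadicShells

variable {X : Type*}

lemma exists_mem_dyadic_shell {a t : ℝ≥0∞} (ha : a ≠ 0) (hat : a ≤ t) (ht : t ≠ ⊤) :
    ∃ n : ℕ, t * 2⁻¹ ^ n / 2 < a ∧ a ≤ t * 2⁻¹ ^ n := by
  lift t to NNReal using ht
  lift a to NNReal using ne_top_of_le_ne_top ENNReal.coe_ne_top hat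
  have ha : 0 < a := pos_iff_ne_zero.2 (by exact_mod_cast ha)
  have hat : a ≤ t := by exact_mod_cast hat
  have ht : 0 < t := ha.trans_le hat
  obtain ⟨n, hlt, hle⟩ := exists_nat_pow_near_of_lt_one (div_pos ha ht)
    ((div_le_one ht).2 hat) (by positivity : (0 : NNReal) < 2⁻¹) (inv_lt_one_of_one_lt₀ one_lt_two)
  rw [lt_div_iff₀' ht, pow_succ, ← mul_assoc, ← div_eq_mul_inv] at hlt
  rw [div_le_iff₀' ht] at hle
  have hcoe : (t : ℝ≥0∞) * 2⁻¹ ^ n = (t * 2⁻¹ ^ n : NNReal) := by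
    simp [ENNReal.inv_pow]
  refine ⟨n, ?_, ?_⟩
  · rw [hcoe, ← ENNReal.coe_ofNat, ← ENNReal.coe_div two_ne_zero]
    exact_mod_cast hlt
  · rw [hcoe]
    exact_mod_cast hle

lemma div_two_rpow_neg {t : ℝ≥0∞} (ht : t ≠ ⊤) (z : ℝ) : (t / 2) ^ (-z) = 2 ^ z * t ^ (-z) := by
  rw [div_eq_mul_inv, ENNReal.mul_rpow_of_ne_top ht (by simp), ENNReal.inv_rpow,
    ENNReal.rpow_neg 2, inv_inv, mul_comm]

/-- The sum of the geometric series `∑ 2^(-nθ)`. -/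
def dyadicSum (θ : ℝ) : ℝ≥0∞ := (1 - 2 ^ (-θ))⁻¹

lemma dyadicSum_ne_top {θ : ℝ} (hθ : 0 < θ) : dyadicSum θ ≠ ⊤ := by
  have : (2 : ℝ≥0∞) ^ (-θ) < 1 :=
    ENNReal.rpow_lt_one_of_one_lt_of_neg ENNReal.one_lt_two (neg_lt_zero.2 hθ)
  simpa [dyadicSum, tsub_eq_zero_iff_le] using this

lemma tsum_mul_dyadic_rpow (B t : ℝ≥0∞) {θ : ℝ} (hθ : 0 ≤ θ) :
    ∑' n : ℕ, B * (t * 2⁻¹ ^ n) ^ θ = B * dyadicSum θ * t ^ θ := by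
  have hterm (n : ℕ) : B * (t * 2⁻¹ ^ n) ^ θ = B * t ^ θ * (2 ^ (-θ)) ^ n := by
    rw [ENNReal.mul_rpow_of_nonneg _ _ hθ, ENNReal.rpow_neg, ← ENNReal.inv_rpow, ← mul_assoc,
      ← ENNReal.rpow_natCast, ← ENNReal.rpow_natCast, ← ENNReal.rpow_mul, ← ENNReal.rpow_mul,
      mul_comm (n : ℝ)]
  simp_rw [hterm, ENNReal.tsum_mul_left, ENNReal.tsum_geometric, dyadicSum, mul_right_comm]

lemma tsum_sublevel_le_of_dyadic_shells {ψ w : X → ℝ≥0∞} (hw : ∀ y, ψ y = 0 → w y = 0)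
    {B : ℝ≥0∞} {θ : ℝ} (hθ : 0 ≤ θ)
    (h : ∀ t ≠ ⊤, t ≠ 0 → ∑' y : {y | t / 2 < ψ y ∧ ψ y ≤ t}, w y ≤ B * t ^ θ)
    {t : ℝ≥0∞} (ht : t ≠ ⊤) (ht0 : t ≠ 0) :
    ∑' y : {y | ψ y ≤ t}, w y ≤ B * dyadicSum θ * t ^ θ := by
  set shell : ℕ → Set X := fun n => {y | t * 2⁻¹ ^ n / 2 < ψ y ∧ ψ y ≤ t * 2⁻¹ ^ n}
  have hcover : {y | ψ y ≤ t}.indicator w ≤ (⋃ n, shell n).indicator w := by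
    refine Set.indicator_le fun y hy => ?_
    by_cases hy0 : ψ y = 0
    · simp [hw y hy0]
    · rw [Set.indicator_of_mem (Set.mem_iUnion.2 (exists_mem_dyadic_shell hy0 hy ht))]
  calc ∑' y : {y | ψ y ≤ t}, w y ≤ ∑' y : ⋃ n, shell n, w y := by
        rw [tsum_subtype, tsum_subtype]
        exact ENNReal.tsum_le_tsum hcover
    _ ≤ ∑' n, ∑' y : shell n, w y := ENNReal.tsum_iUnion_le_tsum w shell
    _ ≤ ∑' n : ℕ, B * (t * 2⁻¹ ^ n) ^ θ :=
        ENNReal.tsum_le_tsum fun n => h _ (by finiteness) (by simp [ht0])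
    _ = B * dyadicSum θ * t ^ θ := tsum_mul_dyadic_rpow B t hθ

end DyadicShells

section KernelOperator

variable {X Y : Type*}

/-- The integral operator with kernel `κ`, acting on nonnegative functions. -/
def kernelOp (κ : X → Y → ℝ≥0∞) (g : Y → ℝ≥0∞) (x : X) : ℝ≥0∞ := ∑' y, κ x y * g y

/-- Every section `κ x` has mass at most `C * |A| ^ γ` on every finite set `A`. For `γ < 1` this
says that the sections are bounded in weak `ℓ^(1/(1-γ))`. -/
def HasSectionBound (κ : X → Y → ℝ≥0∞) (C : ℝ≥0∞) (γ : ℝ) : Prop :=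
  ∀ x, ∀ A : Finset Y, ∑ y ∈ A, κ x y ≤ C * (A.card : ℝ≥0∞) ^ γ

/-- The constant of the level-set estimate for `ℓ^q` functions against a weight of mass at most
`C * |A| ^ γ` on every finite set `A`. -/
def levelConst (C : ℝ≥0∞) (γ q : ℝ) : ℝ≥0∞ := C * 2 ^ (q * γ) * dyadicSum (1 - q * γ)

lemma levelConst_ne_top {C : ℝ≥0∞} (hC : C ≠ ⊤) {γ q : ℝ} (h : q * γ < 1) :
    levelConst C γ q ≠ ⊤ :=
  ENNReal.mul_ne_top (ENNReal.mul_ne_top hC (ENNReal.rpow_ne_top_of_ne_zero two_ne_zero (by simp)))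
    (dyadicSum_ne_top (sub_pos.2 h))

lemma exists_finset_superlevel_subset_card_le {g : Y → ℝ≥0∞} {q : ℝ} (hq : 0 < q)
    (hg : ∑' y, g y ^ q ≤ 1) {s : ℝ≥0∞} (hs : s ≠ 0) (hs' : s ≠ ⊤) :
    ∃ A : Finset Y, (∀ y, s < g y → y ∈ A) ∧ (A.card : ℝ≥0∞) ≤ s ^ (-q) := by
  have hsq : s ^ q ≠ 0 := by simp [hs, hs']
  obtain ⟨hfin, hcard⟩ := ENNReal.finset_card_const_le_le_of_tsum_le ENNReal.one_ne_top hg hsq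
  refine ⟨hfin.toFinset, fun y hy => ?_, ?_⟩
  · simpa using ENNReal.rpow_le_rpow hy.le hq.le
  · rwa [one_div, ← ENNReal.rpow_neg] at hcard

lemma tsum_shell_mul_le {w g : Y → ℝ≥0∞} {C : ℝ≥0∞} {γ q : ℝ} (hγ : 0 ≤ γ) (hq : 0 < q)
    (hw : ∀ A : Finset Y, ∑ y ∈ A, w y ≤ C * (A.card : ℝ≥0∞) ^ γ) (hg : ∑' y, g y ^ q ≤ 1)
    {t : ℝ≥0∞} (ht : t ≠ ⊤) (ht0 : t ≠ 0) :
    ∑' y : {y | t / 2 < g y ∧ g y ≤ t}, w y * g y ≤ C * 2 ^ (q * γ) * t ^ (1 - q * γ) := by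
  obtain ⟨A, hA, hcard⟩ := exists_finset_superlevel_subset_card_le hq hg
    (s := t / 2) (by simp [ht0]) (by finiteness)
  calc ∑' y : {y | t / 2 < g y ∧ g y ≤ t}, w y * g y
      ≤ ∑' y, (A : Set Y).indicator (fun y => w y * t) y := by
        rw [tsum_subtype _ fun y => w y * g y]
        refine ENNReal.tsum_le_tsum (Set.indicator_le fun y hy => ?_)
        rw [Set.indicator_of_mem (Finset.mem_coe.2 (hA y hy.1))]
        gcongr
        exact hy.2
    _ = (∑ y ∈ A, w y) * t := by rw [← sum_eq_tsum_indicator, Finset.sum_mul]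
    _ ≤ C * ((t / 2) ^ (-q)) ^ γ * t := by
        gcongr
        exact (hw A).trans (by gcongr)
    _ = C * 2 ^ (q * γ) * (t ^ (-(q * γ)) * t ^ (1 : ℝ)) := by
        rw [← ENNReal.rpow_mul, neg_mul, div_two_rpow_neg ht, ENNReal.rpow_one]
        ring
    _ = C * 2 ^ (q * γ) * t ^ (1 - q * γ) := by
        rw [← ENNReal.rpow_add _ _ ht0 ht, neg_add_eq_sub]

lemma tsum_sublevel_mul_le {w g : Y → ℝ≥0∞} {C : ℝ≥0∞} {γ q : ℝ} (hγ : 0 ≤ γ) (hq : 0 < q)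
    (hqγ : q * γ ≤ 1) (hw : ∀ A : Finset Y, ∑ y ∈ A, w y ≤ C * (A.card : ℝ≥0∞) ^ γ)
    (hg : ∑' y, g y ^ q ≤ 1) {t : ℝ≥0∞} (ht : t ≠ ⊤) (ht0 : t ≠ 0) :
    ∑' y : {y | g y ≤ t}, w y * g y ≤ levelConst C γ q * t ^ (1 - q * γ) :=
  tsum_sublevel_le_of_dyadic_shells (w := fun y => w y * g y) (fun y hy => by simp [hy])
    (sub_nonneg.2 hqγ) (fun _ hs hs0 => tsum_shell_mul_le hγ hq hw hg hs hs0) ht ht0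

lemma tsum_mul_tsum_sublevel_le {κ : X → Y → ℝ≥0∞} {C : ℝ≥0∞} {γ p q : ℝ}
    (hκ : HasSectionBound κ C γ) (hγ : 0 ≤ γ) (hp : 0 < p) (hq : 0 < q) (hqγ : q * γ ≤ 1)
    (hpq : 1 / p + 1 / q = 1 + γ) {f : X → ℝ≥0∞} {g : Y → ℝ≥0∞}
    (hf : ∑' x, f x ^ p ≤ 1) (hg : ∑' y, g y ^ q ≤ 1) :
    ∑' x, f x * ∑' y : {y | g y ≤ f x ^ (p / q)}, κ x y * g y ≤ levelConst C γ q := by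
  have hexp : 1 + p / q * (1 - q * γ) = p := by
    field_simp at hpq ⊢
    linear_combination hpq
  have hrow (x : X) : f x * ∑' y : {y | g y ≤ f x ^ (p / q)}, κ x y * g y
      ≤ levelConst C γ q * f x ^ p := by
    rcases eq_or_ne (f x) 0 with hx0 | hx0
    · simp [hx0]
    have hx : f x ≠ ⊤ := ne_top_of_tsum_rpow_le_one hp hf x
    calc f x * ∑' y : {y | g y ≤ f x ^ (p / q)}, κ x y * g y
        ≤ f x * (levelConst C γ q * (f x ^ (p / q)) ^ (1 - q * γ)) := by
          gcongr
          exact tsum_sublevel_mul_le hγ hq hqγ (hκ x) hg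
            (ENNReal.rpow_ne_top_of_nonneg (by positivity) hx) (by simp [hx0, hx])
      _ = levelConst C γ q * (f x ^ (1 : ℝ) * f x ^ (p / q * (1 - q * γ))) := by
          rw [← ENNReal.rpow_mul, ENNReal.rpow_one]
          ring
      _ = levelConst C γ q * f x ^ p := by
          rw [← ENNReal.rpow_add _ _ hx0 hx, hexp]
  calc ∑' x, f x * ∑' y : {y | g y ≤ f x ^ (p / q)}, κ x y * g y
      ≤ ∑' x, levelConst C γ q * f x ^ p := ENNReal.tsum_le_tsum hrow
    _ = levelConst C γ q * ∑' x, f x ^ p := ENNReal.tsum_mul_left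
    _ ≤ levelConst C γ q := mul_le_of_le_one_right' hf

lemma tsum_mul_kernelOp_comm (κ : X → Y → ℝ≥0∞) (f : X → ℝ≥0∞) (g : Y → ℝ≥0∞) :
    ∑' x, f x * kernelOp κ g x = ∑' y, g y * kernelOp (flip κ) f y := by
  simp only [kernelOp, flip, ← ENNReal.tsum_mul_left]
  rw [ENNReal.tsum_comm]
  exact tsum_congr fun y => tsum_congr fun x => by ring

lemma tsum_mul_kernelOp_le_add (κ : X → Y → ℝ≥0∞) (f : X → ℝ≥0∞) (g : Y → ℝ≥0∞) {p q : ℝ}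
    (hp : 0 < p) (hq : 0 < q) :
    ∑' x, f x * kernelOp κ g x ≤ (∑' x, f x * ∑' y : {y | g y ≤ f x ^ (p / q)}, κ x y * g y) +
      ∑' y, g y * ∑' x : {x | f x ≤ g y ^ (q / p)}, flip κ y x * f x := by
  have hsplit (x : X) (y : Y) : f x * (κ x y * g y) ≤
      f x * {y | g y ≤ f x ^ (p / q)}.indicator (fun y => κ x y * g y) y +
        g y * {x | f x ≤ g y ^ (q / p)}.indicator (fun x => κ x y * f x) x := by
    rcases le_or_gt (g y) (f x ^ (p / q)) with h | h
    · simp [Set.indicator, h]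
    · have h' : f x ≤ g y ^ (q / p) := by
        rw [← inv_div, ENNReal.le_rpow_inv_iff (by positivity)]
        exact h.le
      refine le_add_left (le_of_eq ?_)
      rw [Set.indicator_of_mem (by exact h')]
      ring
  calc ∑' x, f x * kernelOp κ g x
      ≤ ∑' x, ∑' y, (f x * {y | g y ≤ f x ^ (p / q)}.indicator (fun y => κ x y * g y) y +
          g y * {x | f x ≤ g y ^ (q / p)}.indicator (fun x => κ x y * f x) x) := by
        simp only [kernelOp, ← ENNReal.tsum_mul_left]
        exact ENNReal.tsum_le_tsum fun x => ENNReal.tsum_le_tsum (hsplit x)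
    _ = _ := by
        simp only [ENNReal.tsum_add]
        congr 1
        · simp only [ENNReal.tsum_mul_left]
          exact tsum_congr fun x => by rw [tsum_subtype _ fun y => κ x y * g y]
        · rw [ENNReal.tsum_comm]
          simp only [ENNReal.tsum_mul_left]
          exact tsum_congr fun y => by rw [tsum_subtype _ fun x => flip κ y x * f x]; rfl

lemma mul_lt_one_of_one_div_add_one_div {p q γ : ℝ} (hp : 1 < p) (hq : 0 < q)
    (hpq : 1 / p + 1 / q = 1 + γ) : q * γ < 1 := by
  have : γ < 1 / q := by linarith [(div_lt_one (by linarith)).2 hp]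
  simpa [hq.ne'] using mul_lt_mul_of_pos_left this hq

/-- The bound of the Hardy-Littlewood-Sobolev inequality for a kernel with section constant `C₁`
whose transpose has section constant `C₂`. -/
def hlsConst (C₁ C₂ : ℝ≥0∞) (γ p q : ℝ) : ℝ≥0∞ := levelConst C₁ γ q + levelConst C₂ γ p

lemma tsum_mul_kernelOp_le_hlsConst {κ : X → Y → ℝ≥0∞} {C₁ C₂ : ℝ≥0∞} {γ p q : ℝ}
    (h₁ : HasSectionBound κ C₁ γ) (h₂ : HasSectionBound (flip κ) C₂ γ)
    (hγ : 0 ≤ γ) (hp : 1 < p) (hq : 1 < q) (hpq : 1 / p + 1 / q = 1 + γ)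
    {f : X → ℝ≥0∞} {g : Y → ℝ≥0∞} (hf : lpENorm p f ≤ 1) (hg : lpENorm q g ≤ 1) :
    ∑' x, f x * kernelOp κ g x ≤ hlsConst C₁ C₂ γ p q := by
  have hp0 : 0 < p := by linarith
  have hq0 : 0 < q := by linarith
  have hqp : 1 / q + 1 / p = 1 + γ := by linarith
  have hf' := tsum_rpow_le_one_of_lpENorm_le_one hp0 hf
  have hg' := tsum_rpow_le_one_of_lpENorm_le_one hq0 hg
  exact (tsum_mul_kernelOp_le_add κ f g hp0 hq0).trans <| add_le_add
    (tsum_mul_tsum_sublevel_le h₁ hγ hp0 hq0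
      (mul_lt_one_of_one_div_add_one_div hp hq0 hpq).le hpq hf' hg')
    (tsum_mul_tsum_sublevel_le h₂ hγ hq0 hp0
      (mul_lt_one_of_one_div_add_one_div hq hp0 hqp).le hqp hg' hf')

theorem lpENorm_kernelOp_le {κ : X → Y → ℝ≥0∞} {C₁ C₂ : ℝ≥0∞} {γ p p' q : ℝ}
    (h₁ : HasSectionBound κ C₁ γ) (h₂ : HasSectionBound (flip κ) C₂ γ)
    (hγ : 0 ≤ γ) (hp : p.HolderConjugate p') (hq : 1 < q) (hpq : 1 / p + 1 / q = 1 + γ)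
    (g : Y → ℝ≥0∞) :
    lpENorm p' (kernelOp κ g) ≤ hlsConst C₁ C₂ γ p q * lpENorm q g := by
  have hqq := Real.HolderConjugate.conjExponent hq
  refine lpENorm_le_of_forall_tsum_mul_le hp fun f hf => ?_
  have hdual : lpENorm q.conjExponent (kernelOp (flip κ) f) ≤ hlsConst C₁ C₂ γ p q :=
    lpENorm_le_of_forall_tsum_mul_le hqq fun g hg =>
      tsum_mul_kernelOp_comm κ f g ▸ tsum_mul_kernelOp_le_hlsConst h₁ h₂ hγ hp.lt hq hpq hf hg
  calc ∑' x, f x * kernelOp κ g x = ∑' y, g y * kernelOp (flip κ) f y :=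
        tsum_mul_kernelOp_comm κ f g
    _ ≤ lpENorm q g * lpENorm q.conjExponent (kernelOp (flip κ) f) :=
        tsum_mul_le_lpENorm_mul_lpENorm hqq g _
    _ ≤ hlsConst C₁ C₂ γ p q * lpENorm q g := by
        rw [mul_comm]
        gcongr

lemma hlsConst_ne_top {C₁ C₂ : ℝ≥0∞} (hC₁ : C₁ ≠ ⊤) (hC₂ : C₂ ≠ ⊤) {γ p q : ℝ}
    (hp : 1 < p) (hq : 1 < q) (hpq : 1 / p + 1 / q = 1 + γ) : hlsConst C₁ C₂ γ p q ≠ ⊤ :=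
  ENNReal.add_ne_top.2
    ⟨levelConst_ne_top hC₁ (mul_lt_one_of_one_div_add_one_div hp (by linarith) hpq),
      levelConst_ne_top hC₂ (mul_lt_one_of_one_div_add_one_div hq (by linarith) (by linarith))⟩

end KernelOperator

section RieszDecay

variable {Y : Type*}

/-- The constant of the section bound for a kernel of Riesz type, in terms of the volume constant
`V`, the kernel constant `c`, the order `α` and the dimension `d`. -/
def rieszConst (V c : ℝ≥0∞) (α d : ℝ) : ℝ≥0∞ := c * 2 ^ (d - α) * V * dyadicSum α + c

lemma rieszConst_ne_top {V c : ℝ≥0∞} (hV : V ≠ ⊤) (hc : c ≠ ⊤) {α : ℝ} (hα : 0 < α) (d : ℝ) :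
    rieszConst V c α d ≠ ⊤ := by
  have h2 : (2 : ℝ≥0∞) ^ (d - α) ≠ ⊤ := ENNReal.rpow_ne_top_of_ne_zero two_ne_zero (by simp)
  have := dyadicSum_ne_top hα
  unfold rieszConst
  finiteness

lemma rpow_le_rpow_of_nonpos {a b : ℝ≥0∞} {z : ℝ} (hab : a ≤ b) (hz : z ≤ 0) :
    b ^ z ≤ a ^ z := by
  rw [← neg_neg z, ENNReal.rpow_neg, ENNReal.rpow_neg a, ENNReal.inv_le_inv]
  exact ENNReal.rpow_le_rpow hab (neg_nonneg.2 hz)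

lemma tsum_dyadic_shell_le_of_encard_le {ψ k : Y → ℝ≥0∞} {V c : ℝ≥0∞} {α d : ℝ} (hαd : α ≤ d)
    (hV : ∀ ρ ≠ ⊤, ({y | ψ y ≠ 0 ∧ ψ y ≤ ρ}.encard : ℝ≥0∞) ≤ V * ρ ^ d)
    (hk : ∀ y, ψ y ≠ 0 → k y ≤ c * ψ y ^ (α - d)) {t : ℝ≥0∞} (ht : t ≠ ⊤) (ht0 : t ≠ 0) :
    ∑' y : {y | t / 2 < ψ y ∧ ψ y ≤ t}, k y ≤ c * 2 ^ (d - α) * V * t ^ α := by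
  have hpos {y : Y} (hy : t / 2 < ψ y) : ψ y ≠ 0 := (zero_le.trans_lt hy).ne'
  calc ∑' y : {y | t / 2 < ψ y ∧ ψ y ≤ t}, k y
      ≤ ∑' y : {y | t / 2 < ψ y ∧ ψ y ≤ t}, c * (t / 2) ^ (α - d) := by
        refine ENNReal.tsum_le_tsum fun ⟨y, hy, _⟩ => (hk y (hpos hy)).trans ?_
        gcongr 1
        exact rpow_le_rpow_of_nonpos hy.le (sub_nonpos.2 hαd)
    _ = c * (t / 2) ^ (α - d) * ({y | t / 2 < ψ y ∧ ψ y ≤ t}.encard : ℝ≥0∞) := by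
        rw [ENNReal.tsum_set_const, mul_comm]
    _ ≤ c * (t / 2) ^ (α - d) * (V * t ^ d) := by
        gcongr
        refine (ENat.toENNReal_le.2 (Set.encard_le_encard ?_)).trans (hV t ht)
        exact fun y hy => ⟨hpos hy.1, hy.2⟩
    _ = c * 2 ^ (d - α) * V * (t ^ (α - d) * t ^ d) := by
        rw [← neg_sub d α, div_two_rpow_neg ht]
        ring
    _ = c * 2 ^ (d - α) * V * t ^ α := by
        rw [← ENNReal.rpow_add _ _ ht0 ht, sub_add_cancel]

lemma sum_filter_lt_le_card_mul {ψ k : Y → ℝ≥0∞} {c ρ : ℝ≥0∞} {β : ℝ} (hβ : β ≤ 0)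
    (hk : ∀ y, ψ y ≠ 0 → k y ≤ c * ψ y ^ β) (A : Finset Y) :
    ∑ y ∈ A with ρ < ψ y, k y ≤ A.card * (c * ρ ^ β) := by
  calc ∑ y ∈ A with ρ < ψ y, k y ≤ ∑ y ∈ A with ρ < ψ y, c * ρ ^ β := by
        refine Finset.sum_le_sum fun y hy => ?_
        have hlt : ρ < ψ y := (Finset.mem_filter.1 hy).2
        refine (hk y (zero_le.trans_lt hlt).ne').trans ?_
        gcongr 1
        exact rpow_le_rpow_of_nonpos hlt.le hβ
    _ ≤ A.card * (c * ρ ^ β) := by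
        rw [Finset.sum_const, nsmul_eq_mul]
        gcongr
        exact Finset.filter_subset _ _

lemma sum_le_rieszConst_mul_card_rpow {ψ k : Y → ℝ≥0∞} {V c : ℝ≥0∞} {α d : ℝ} (hα : 0 < α)
    (hαd : α ≤ d) (hV : ∀ ρ ≠ ⊤, ({y | ψ y ≠ 0 ∧ ψ y ≤ ρ}.encard : ℝ≥0∞) ≤ V * ρ ^ d)
    (hk : ∀ y, ψ y ≠ 0 → k y ≤ c * ψ y ^ (α - d)) (hk0 : ∀ y, ψ y = 0 → k y = 0)
    (A : Finset Y) : ∑ y ∈ A, k y ≤ rieszConst V c α d * (A.card : ℝ≥0∞) ^ (α / d) := by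
  rcases A.eq_empty_or_nonempty with rfl | hA
  · simp
  have hd : 0 < d := hα.trans_le hαd
  have hcard : (A.card : ℝ≥0∞) ≠ 0 := by simpa using hA.ne_empty
  -- The radius at which a ball has about as many elements as `A`.
  obtain ⟨ρ, hρ⟩ : ∃ ρ : ℝ≥0∞, ρ = (A.card : ℝ≥0∞) ^ (1 / d) := ⟨_, rfl⟩
  have hρ0 : ρ ≠ 0 := by simp [hρ, hcard]
  have hρt : ρ ≠ ⊤ := hρ ▸ ENNReal.rpow_ne_top_of_nonneg (by positivity) (by simp)
  have hρd : (A.card : ℝ≥0∞) = ρ ^ d := by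
    rw [hρ, ← ENNReal.rpow_mul, one_div_mul_cancel hd.ne', ENNReal.rpow_one]
  have hnear : ∑' y : {y | ψ y ≤ ρ}, k y ≤ c * 2 ^ (d - α) * V * dyadicSum α * ρ ^ α :=
    tsum_sublevel_le_of_dyadic_shells hk0 hα.le
      (fun t ht ht0 => tsum_dyadic_shell_le_of_encard_le hαd hV hk ht ht0) hρt hρ0
  have hfar : ∑ y ∈ A with ρ < ψ y, k y ≤ c * ρ ^ α :=
    calc ∑ y ∈ A with ρ < ψ y, k y ≤ A.card * (c * ρ ^ (α - d)) :=
          sum_filter_lt_le_card_mul (sub_nonpos.2 hαd) hk A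
      _ = c * (ρ ^ (α - d) * ρ ^ d) := by rw [hρd]; ring
      _ = c * ρ ^ α := by rw [← ENNReal.rpow_add _ _ hρ0 hρt, sub_add_cancel]
  calc ∑ y ∈ A, k y = ∑ y ∈ A with ψ y ≤ ρ, k y + ∑ y ∈ A with ρ < ψ y, k y := by
        simp_rw [← not_le, Finset.sum_filter_add_sum_filter_not]
    _ ≤ ∑' y : {y | ψ y ≤ ρ}, k y + ∑ y ∈ A with ρ < ψ y, k y := by
        gcongr
        rw [tsum_subtype, sum_eq_tsum_indicator]
        exact ENNReal.tsum_le_tsum <| Set.indicator_le_indicator_of_subset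
          (fun y hy => (Finset.mem_filter.1 hy).2) fun _ => zero_le
    _ ≤ c * 2 ^ (d - α) * V * dyadicSum α * ρ ^ α + c * ρ ^ α := add_le_add hnear hfar
    _ = rieszConst V c α d * (A.card : ℝ≥0∞) ^ (α / d) := by
        rw [rieszConst, ← add_mul, hρd, ← ENNReal.rpow_mul, mul_div_cancel₀ _ hd.ne']

lemma encard_natCast_le_of_one_le {ℓ : Y → ℕ} {V : ℝ≥0∞} {d : ℝ}
    (h : ∀ ρ : ℝ, 1 ≤ ρ → ({y | (ℓ y : ℝ) ≤ ρ}.encard : ℝ≥0∞) ≤ V * ENNReal.ofReal ρ ^ d)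
    (ρ : ℝ≥0∞) (hρ : ρ ≠ ⊤) :
    ({y | (ℓ y : ℝ≥0∞) ≠ 0 ∧ (ℓ y : ℝ≥0∞) ≤ ρ}.encard : ℝ≥0∞) ≤ V * ρ ^ d := by
  lift ρ to NNReal using hρ
  rcases lt_or_ge ρ 1 with h1 | h1
  · have hempty : {y | (ℓ y : ℝ≥0∞) ≠ 0 ∧ (ℓ y : ℝ≥0∞) ≤ ρ} = ∅ := by
      refine Set.eq_empty_of_forall_notMem fun y ⟨hy0, hy⟩ => hy0 ?_
      have : (ℓ y : ℝ≥0∞) < 1 := hy.trans_lt (by exact_mod_cast h1)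
      simpa using this
    rw [hempty]
    simp
  · refine le_trans ?_ ((h ρ (by exact_mod_cast h1)).trans_eq (by simp))
    exact ENat.toENNReal_le.2 (Set.encard_le_encard fun y hy => by exact_mod_cast hy.2)

end RieszDecay

/-- The kernel of `convE R`: the off-diagonal part of `R`, as an `ℝ≥0∞`-valued kernel. -/
def offDiagKernel [DecidableEq G] (R : G → G → ℝ) (x y : G) : ℝ≥0∞ :=
  if y = x then 0 else ENNReal.ofReal (R x y)

lemma convE_eq_kernelOp [DecidableEq G] {R : G → G → ℝ} (hR : ∀ x y, 0 ≤ R x y) (f : G → ℝ) :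
    convE R f = kernelOp (offDiagKernel R) fun y => ENNReal.ofReal (f y) := by
  funext x
  simp only [convE, kernelOp, offDiagKernel, ite_mul, zero_mul, ENNReal.ofReal_mul (hR x _)]

section WordMetric

variable [Group G] {S : Finset G} {N : ℕ}

lemma wordDist_mul_left (S : Finset G) (z x y : G) :
    wordDist S (z * x) (z * y) = wordDist S x y := by
  simp only [wordDist, mul_inv_rev, mul_assoc, inv_mul_cancel_left]

lemma encard_wordDist_left_le (S : Finset G) (x : G) (ρ : ℝ) :
    {y | (wordDist S x y : ℝ) ≤ ρ}.encard ≤ (ball S 1 ρ).encard := by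
  refine Set.encard_le_encard_of_injOn (f := fun y => y⁻¹ * x) (fun y hy => ?_)
    fun y _ z _ h => inv_injective (mul_right_cancel h)
  simpa [ball, ← wordDist_mul_left S y (y⁻¹ * x) 1] using hy

lemma encard_wordDist_right_le (S : Finset G) (y : G) (ρ : ℝ) :
    {x | (wordDist S x y : ℝ) ≤ ρ}.encard ≤ (ball S 1 ρ).encard := by
  refine Set.encard_le_encard_of_injOn (f := fun x => y⁻¹ * x) (fun x hx => ?_)
    (mul_right_injective y⁻¹).injOn
  simpa [ball, ← wordDist_mul_left S y (y⁻¹ * x) 1] using hx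

lemma exists_encard_ball_le (h : PolyGrowth S N) :
    ∃ V : ℝ≥0∞, V ≠ ⊤ ∧
      ∀ ρ : ℝ, 1 ≤ ρ → ((ball S (1 : G) ρ).encard : ℝ≥0∞) ≤ V * ENNReal.ofReal ρ ^ (N : ℝ) := by
  obtain ⟨C₁, C₂, hC₁, hC₂, hgrowth⟩ := h
  refine ⟨ENNReal.ofReal C₂, ENNReal.ofReal_ne_top, fun ρ hρ => ?_⟩
  obtain ⟨hlower, hupper⟩ := hgrowth ρ hρ
  have hfin : (ball S (1 : G) ρ).Finite := by
    have hcard : (0 : ℝ) < (ball S (1 : G) ρ).ncard := lt_of_lt_of_le (by positivity) hlower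
    exact Set.finite_of_ncard_pos (by exact_mod_cast hcard)
  rw [← hfin.cast_ncard_eq, ENat.toENNReal_coe, ← ENNReal.ofReal_natCast, ENNReal.rpow_natCast,
    ← ENNReal.ofReal_pow (by linarith), ← ENNReal.ofReal_mul hC₂.le]
  exact ENNReal.ofReal_le_ofReal hupper

lemma offDiagKernel_le [DecidableEq G] {R : G → G → ℝ} {c β : ℝ}
    (hR : ∀ x y, x ≠ y → R x y ≤ c * (wordDist S x y : ℝ) ^ β) {x y : G}
    (h : (wordDist S x y : ℝ≥0∞) ≠ 0) :
    offDiagKernel R x y ≤ ENNReal.ofReal c * (wordDist S x y : ℝ≥0∞) ^ β := by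
  unfold offDiagKernel
  split_ifs with hxy
  · exact zero_le
  have hpos : (0 : ℝ) < wordDist S x y := by
    exact_mod_cast Nat.pos_of_ne_zero (by exact_mod_cast h)
  rw [← ENNReal.ofReal_natCast, ENNReal.ofReal_rpow_of_pos hpos,
    ← ENNReal.ofReal_mul' (by positivity)]
  exact ENNReal.ofReal_le_ofReal (hR x y (Ne.symm hxy))

lemma offDiagKernel_eq_zero [DecidableEq G] {R : G → G → ℝ} {c β : ℝ} (hβ : β ≠ 0)
    (hR : ∀ x y, x ≠ y → R x y ≤ c * (wordDist S x y : ℝ) ^ β) {x y : G}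
    (h : (wordDist S x y : ℝ≥0∞) = 0) : offDiagKernel R x y = 0 := by
  have h0 : wordDist S x y = 0 := by exact_mod_cast h
  unfold offDiagKernel
  split_ifs with hxy
  · rfl
  exact ENNReal.ofReal_of_nonpos (by simpa [h0, hβ] using hR x y (Ne.symm hxy))

theorem exists_hasSectionBound_offDiagKernel [DecidableEq G] (hS : PolyGrowth S N) {α : ℝ}
    (hα : 0 < α) (hαN : α < N) (c : ℝ) :
    ∃ K : ℝ≥0∞, K ≠ ⊤ ∧ ∀ R : G → G → ℝ,
      (∀ x y, x ≠ y → R x y ≤ c * (wordDist S x y : ℝ) ^ (α - N)) →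
      HasSectionBound (offDiagKernel R) K (α / N) ∧
        HasSectionBound (flip (offDiagKernel R)) K (α / N) := by
  obtain ⟨V, hV, hball⟩ := exists_encard_ball_le hS
  refine ⟨rieszConst V (ENNReal.ofReal c) α N, rieszConst_ne_top hV ENNReal.ofReal_ne_top hα N,
    fun R hR => ⟨fun x => ?_, fun y => ?_⟩⟩
  · refine sum_le_rieszConst_mul_card_rpow (ψ := fun y => (wordDist S x y : ℝ≥0∞)) hα hαN.le
      (encard_natCast_le_of_one_le fun ρ hρ => ?_) (fun y => offDiagKernel_le hR)
      fun y => offDiagKernel_eq_zero (sub_neg.2 hαN).ne hR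
    exact (ENat.toENNReal_le.2 (encard_wordDist_left_le S x ρ)).trans (hball ρ hρ)
  · refine sum_le_rieszConst_mul_card_rpow (ψ := fun x => (wordDist S x y : ℝ≥0∞)) hα hαN.le
      (encard_natCast_le_of_one_le fun ρ hρ => ?_) (fun x => offDiagKernel_le hR)
      fun x => offDiagKernel_eq_zero (sub_neg.2 hαN).ne hR
    exact (ENat.toENNReal_le.2 (encard_wordDist_right_le S y ρ)).trans (hball ρ hρ)

end WordMetric

section LpNorm

variable {X : Type*}

lemma lpNorm_nonneg (q : ℝ) (u : X → ℝ) : 0 ≤ lpNorm q u :=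
  Real.rpow_nonneg (tsum_nonneg fun x => by positivity) _

lemma tsum_abs_rpow_eq_lpNorm_rpow {q : ℝ} (hq : q ≠ 0) (u : X → ℝ) :
    ∑' x, |u x| ^ q = lpNorm q u ^ q := by
  rw [lpNorm, one_div, Real.rpow_inv_rpow (tsum_nonneg fun x => by positivity) hq]

lemma abs_le_lpNorm {q : ℝ} (hq : 0 < q) {u : X → ℝ} (hu : Memlp q u) (x : X) :
    |u x| ≤ lpNorm q u := by
  rw [← Real.rpow_le_rpow_iff (abs_nonneg _) (lpNorm_nonneg q u) hq,
    ← tsum_abs_rpow_eq_lpNorm_rpow hq.ne']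
  exact hu.le_tsum x fun y _ => by positivity

lemma abs_rpow_le_lpNorm_rpow_mul {r q : ℝ} (hr : 0 < r) (hrq : r ≤ q) {u : X → ℝ}
    (hu : Memlp r u) (x : X) : |u x| ^ q ≤ lpNorm r u ^ (q - r) * |u x| ^ r := by
  calc |u x| ^ q = |u x| ^ (q - r) * |u x| ^ r := by
        rw [← Real.rpow_add_of_nonneg (abs_nonneg _) (sub_nonneg.2 hrq) hr.le, sub_add_cancel]
    _ ≤ lpNorm r u ^ (q - r) * |u x| ^ r := by
        gcongr ?_ * _
        exact Real.rpow_le_rpow (abs_nonneg _) (abs_le_lpNorm hr hu x) (sub_nonneg.2 hrq)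

lemma Memlp.mono {r q : ℝ} (hr : 0 < r) (hrq : r ≤ q) {u : X → ℝ} (hu : Memlp r u) :
    Memlp q u :=
  Summable.of_nonneg_of_le (fun _ => by positivity) (abs_rpow_le_lpNorm_rpow_mul hr hrq hu)
    (hu.mul_left _)

lemma lpNorm_le_lpNorm {r q : ℝ} (hr : 0 < r) (hrq : r ≤ q) {u : X → ℝ} (hu : Memlp r u) :
    lpNorm q u ≤ lpNorm r u := by
  have hq : 0 < q := hr.trans_le hrq
  rw [← Real.rpow_le_rpow_iff (lpNorm_nonneg q u) (lpNorm_nonneg r u) hq,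
    ← tsum_abs_rpow_eq_lpNorm_rpow hq.ne']
  calc ∑' x, |u x| ^ q ≤ ∑' x, lpNorm r u ^ (q - r) * |u x| ^ r :=
        (hu.mono hr hrq).tsum_le_tsum (abs_rpow_le_lpNorm_rpow_mul hr hrq hu) (hu.mul_left _)
    _ = lpNorm r u ^ (q - r) * lpNorm r u ^ r := by
        rw [tsum_mul_left, tsum_abs_rpow_eq_lpNorm_rpow hr.ne']
    _ = lpNorm r u ^ q := by
        rw [← Real.rpow_add_of_nonneg (lpNorm_nonneg r u) (sub_nonneg.2 hrq) hr.le,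
          sub_add_cancel]

lemma lpENorm_ofReal_abs_rpow {p r : ℝ} (hr : 0 < r) (hp : p ≠ 0) {u : X → ℝ}
    (hu : Memlp (p * r) u) :
    lpENorm r (fun x => ENNReal.ofReal (|u x| ^ p)) = ENNReal.ofReal (lpNorm (p * r) u ^ p) := by
  have hsum (x : X) : ENNReal.ofReal (|u x| ^ p) ^ r = ENNReal.ofReal (|u x| ^ (p * r)) := by
    rw [ENNReal.ofReal_rpow_of_nonneg (by positivity) hr.le, Real.rpow_mul (abs_nonneg _)]
  rw [lpENorm, tsum_congr hsum, ← ENNReal.ofReal_tsum_of_nonneg (fun x => by positivity) hu,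
    tsum_abs_rpow_eq_lpNorm_rpow (by positivity), Real.rpow_mul (lpNorm_nonneg _ u),
    ENNReal.ofReal_rpow_of_nonneg (Real.rpow_nonneg (Real.rpow_nonneg (lpNorm_nonneg _ u) _) _)
      (by positivity), one_div, Real.rpow_rpow_inv (Real.rpow_nonneg (lpNorm_nonneg _ u) _) hr.ne']

end LpNorm

section Energy

variable [Group G] {S : Finset G} {a : G → ℝ} {lam : ℝ}

lemma sq_le_eDensity (hlam : 0 ≤ lam) (ha : ∀ x, 0 ≤ a x) (S : Finset G) (u : G → ℝ) (x : G) :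
    u x ^ 2 ≤ eDensity S a lam u x := by
  have hgrad : 0 ≤ grad S u u x :=
    mul_nonneg (by norm_num) (Finset.sum_nonneg fun s _ => mul_self_nonneg _)
  have hpot : 0 ≤ lam * a x * u x ^ 2 := mul_nonneg (mul_nonneg hlam (ha x)) (sq_nonneg _)
  unfold eDensity
  linarith [sq_nonneg (lap S u x)]

lemma MemE.memlp_two (hlam : 0 ≤ lam) (ha : ∀ x, 0 ≤ a x) {u : G → ℝ} (hu : MemE S a lam u) :
    Memlp 2 u := by
  simpa [Memlp] using
    Summable.of_nonneg_of_le (fun x => sq_nonneg (u x)) (sq_le_eDensity hlam ha S u) hu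

lemma lpNorm_two_le_normE (hlam : 0 ≤ lam) (ha : ∀ x, 0 ≤ a x) {u : G → ℝ}
    (hu : MemE S a lam u) : lpNorm 2 u ≤ normE S a lam u := by
  rw [normE, Real.sqrt_eq_rpow, lpNorm]
  refine Real.rpow_le_rpow (tsum_nonneg fun x => by positivity) ?_ (by norm_num)
  refine (hu.memlp_two hlam ha).tsum_le_tsum (fun x => ?_) hu
  simpa using sq_le_eDensity hlam ha S u x

end Energy

lemma holderConjugate_hlsExponents {α d : ℝ} (hα : 0 < α) (hαd : α < d) :
    (2 * d / (d + α)).HolderConjugate (2 * d / (d - α)) := by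
  rw [Real.holderConjugate_iff, lt_div_iff₀ (by linarith), inv_div, inv_div, ← add_div,
    div_eq_one_iff_eq (by linarith)]
  constructor <;> linarith

theorem exists_lpENorm_kernelOp_offDiagKernel_le [Group G] [DecidableEq G] {S : Finset G} {N : ℕ}
    (hS : PolyGrowth S N) {α : ℝ} (hα : 0 < α) (hαN : α < N) (c : ℝ) :
    ∃ C : ℝ, 0 < C ∧ ∀ R : G → G → ℝ,
      (∀ x y, x ≠ y → R x y ≤ c * (wordDist S x y : ℝ) ^ (α - N)) → ∀ f : G → ℝ≥0∞,
      lpENorm (2 * N / (N - α)) (kernelOp (offDiagKernel R) f) ≤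
        ENNReal.ofReal C * lpENorm (2 * N / (N + α)) f := by
  obtain ⟨K, hK, hsec⟩ := exists_hasSectionBound_offDiagKernel hS hα hαN c
  have hconj := holderConjugate_hlsExponents hα hαN
  have hexp : 1 / (2 * N / (N + α)) + 1 / (2 * N / (N + α)) = 1 + α / N := by
    have hN : (0 : ℝ) < N := hα.trans hαN
    field_simp
    norm_num
  set D := hlsConst K K (α / N) (2 * N / (N + α)) (2 * N / (N + α))
  have hD : D ≤ ENNReal.ofReal (D.toReal + 1) :=
    (ENNReal.le_ofReal_iff_toReal_le (hlsConst_ne_top hK hK hconj.lt hconj.lt hexp)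
      (by positivity)).2 (by linarith)
  refine ⟨D.toReal + 1, by positivity, fun R hR f => ?_⟩
  obtain ⟨hleft, hright⟩ := hsec R hR
  refine (lpENorm_kernelOp_le hleft hright (by positivity) hconj hconj.lt hexp f).trans ?_
  gcongr

theorem hls_energy_bounds_general [Group G] [DecidableEq G] (S : Finset G) (N : ℕ)
    (hgrowth : PolyGrowth S N) (α : ℝ) (hα0 : 0 < α) (hαN : α < N) (c : ℝ) :
    ∃ C : ℝ, 0 < C ∧ ∀ R : G → G → ℝ, (∀ x y, 0 ≤ R x y) →
      (∀ x y, x ≠ y → R x y ≤ c * (wordDist S x y : ℝ) ^ (α - N)) →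
      ∀ p : ℝ, (N + α) / N ≤ p →
      ∀ lam : ℝ, 0 ≤ lam → ∀ a : G → ℝ, (∀ x, 0 ≤ a x) → ∀ u : G → ℝ, MemE S a lam u →
      (∑' x, convE R (fun y => |u y| ^ p) x * ENNReal.ofReal (|u x| ^ p))
          ≤ ENNReal.ofReal (C * lpNorm (2 * N * p / (N + α)) u ^ (2 * p)) ∧
      C * lpNorm (2 * N * p / (N + α)) u ^ (2 * p) ≤ C * normE S a lam u ^ (2 * p) ∧
      (∑' x, convE R (fun y => |u y| ^ p) x ^ (2 * N / (N - α))) ^ ((N - α) / (2 * N))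
        ≤ ENNReal.ofReal (C * lpNorm (2 * N * p / (N + α)) u ^ p) := by
  obtain ⟨C, hC, hHLS⟩ := exists_lpENorm_kernelOp_offDiagKernel_le hgrowth hα0 hαN c
  refine ⟨C, hC, fun R hR0 hR p hp lam hlam a ha u hu => ?_⟩
  have hN : (0 : ℝ) < N := hα0.trans hαN
  have hp0 : 0 < p := lt_of_lt_of_le (by positivity) hp
  have hconj := holderConjugate_hlsExponents hα0 hαN
  have hq : 2 ≤ p * (2 * N / (N + α)) := by
    calc (2 : ℝ) = (N + α) / N * (2 * N / (N + α)) := by field_simp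
      _ ≤ p * (2 * N / (N + α)) := by gcongr
  have hu2 := hu.memlp_two hlam ha
  have hnorm := lpENorm_ofReal_abs_rpow hconj.pos hp0.ne' (hu2.mono two_pos hq)
  have hbound := hHLS R hR fun y => ENNReal.ofReal (|u y| ^ p)
  rw [← convE_eq_kernelOp hR0, hnorm, ← ENNReal.ofReal_mul hC.le] at hbound
  rw [show 2 * N * p / (N + α) = p * (2 * N / (N + α)) by ring]
  set L := lpNorm (p * (2 * N / (N + α))) u
  have hL : 0 ≤ L := lpNorm_nonneg _ u
  refine ⟨?_, ?_, by rwa [lpENorm, one_div_div] at hbound⟩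
  · calc ∑' x, convE R (fun y => |u y| ^ p) x * ENNReal.ofReal (|u x| ^ p)
        ≤ ENNReal.ofReal (C * L ^ p) * ENNReal.ofReal (L ^ p) := by
          refine (tsum_mul_le_lpENorm_mul_lpENorm hconj.symm _ _).trans ?_
          rw [hnorm]
          gcongr
      _ = ENNReal.ofReal (C * L ^ (2 * p)) := by
          rw [← ENNReal.ofReal_mul (by positivity), mul_assoc, ← Real.rpow_add_of_nonneg hL
            hp0.le hp0.le, two_mul]
  · gcongr
    exact (lpNorm_le_lpNorm two_pos hq hu2).trans (lpNorm_two_le_normE hlam ha hu)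

theorem hls_energy_bounds
    {G : Type*} [Group G] [Countable G] [DecidableEq G]
    (S : Finset G) (hSsymm : ∀ s ∈ S, s⁻¹ ∈ S)
    (hSgen : Subgroup.closure (S : Set G) = ⊤)
    (N : ℕ) (hN : 2 ≤ N) (hgrowth : PolyGrowth S N)
    (α : ℝ) (hα0 : 0 < α) (hαN : α < (N : ℝ))
    (R : G → G → ℝ) (hR : RieszKernel S N α R)
    (p : ℝ) (hp : ((N : ℝ) + α) / (N : ℝ) < p) :
    ∃ C : ℝ, 0 < C ∧ ∀ lam : ℝ, 0 < lam → ∀ a : G → ℝ, (∀ x, 0 ≤ a x) →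
      ∀ u : G → ℝ, MemE S a lam u →
      (∑' x : G, convE R (fun y => |u y| ^ p) x * ENNReal.ofReal (|u x| ^ p))
          ≤ ENNReal.ofReal (C * lpNorm (2 * (N : ℝ) * p / ((N : ℝ) + α)) u ^ (2 * p)) ∧
      C * lpNorm (2 * (N : ℝ) * p / ((N : ℝ) + α)) u ^ (2 * p)
          ≤ C * normE S a lam u ^ (2 * p) ∧
      (∑' x : G, convE R (fun y => |u y| ^ p) x ^ (2 * (N : ℝ) / ((N : ℝ) - α)))
          ^ (((N : ℝ) - α) / (2 * (N : ℝ)))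
        ≤ ENNReal.ofReal (C * lpNorm (2 * (N : ℝ) * p / ((N : ℝ) + α)) u ^ p) := by
  obtain ⟨hRpos, _, c, _, _, hRb⟩ := hR
  obtain ⟨C, hC, hbounds⟩ := hls_energy_bounds_general S N hgrowth α hα0 hαN c
  exact ⟨C, hC, fun lam hlam => hbounds R (fun x y => (hRpos x y).le)
    (fun x y hxy => (hRb x y hxy).2) p hp.le lam hlam.le⟩

end Choquard
end
end

section
/- (Brézis–Lieb lemma for the nonlocal term.) Assume N ≥ 2, 0 < α < N and p > (N+α)/N. Let {u_n} be a sequence of functions G → ℝ that is bounded in ℓ^{2Np/(N+α)}(G) and converges pointwise on G to a function u. Then lim_{n→∞} ( Σ_G (R_α ∗ |u_n|^p)|u_n|^p − Σ_G (R_α ∗ |u_n − u|^p)|u_n − u|^p ) = Σ_G (R_α ∗ |u|^p)|u|^p. -/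
open scoped BigOperators ENNReal
open Filter

noncomputable section

namespace Choquard

variable {G : Type*}

/-!
With `m = N / (N - α)` and `r = 2N / (N + α)`, which satisfy `1 / (2m) + 1 / r = 1`, the Riesz
kernel lies in weak `ℓ^m` along rows and columns, because balls grow like `ρ ^ N`. By the
Hardy–Littlewood–Sobolev inequality the nonlocal term is therefore `Q F F`, where `Q` is a bounded
bilinear form on `ℓ^r` and `F = |u| ^ p`. Put `V n = |U n - u| ^ p` and `W = |u| ^ p`.
The elementary inequality behind the classical Brézis–Lieb lemma gives `|U n| ^ p - V n → W` in the
norm of `ℓ^r`, while `V n`, bounded and pointwise null, tends weakly to `0` since `1 < r < ∞`.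
Expanding `Q (V n + Z n) (V n + Z n)` with `Z n → W` in norm, the cross terms pair a norm-convergent
sequence with a weakly null one, so only `Q W W` survives.

The Hardy–Littlewood–Sobolev inequality is proved for `∑ k x y h x h y` by restricting to
`h y ≤ h x` and bounding each row: after rescaling to `h x = 1`, Young's inequality
`z y ≤ min z (z ^ {2m}) + y ^ r` applies, and `∑ min k (k ^ {2m})` converges dyadically because
`1 < m < 2m`.
-/

open scoped NNReal Topology

section WeakType

variable {ι : Type*} {m s : ℝ} {C : ℝ≥0} {f : ι → ℝ≥0}

/-- Membership in weak `ℓ^m` over `ι` with constant `C`: the superlevel set of `f` at height `t`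
has at most `C t^{-m}` points. -/
def IsWeakLp (m : ℝ) (C : ℝ≥0) (f : ι → ℝ≥0) : Prop :=
  ∀ t : ℝ≥0, t ≠ 0 → ({y | t ≤ f y}.encard : ℝ≥0∞) ≤ (C * t ^ (-m) : ℝ≥0)

theorem IsWeakLp.const_mul (hf : IsWeakLp m C f) {a : ℝ≥0} (ha : a ≠ 0) :
    IsWeakLp m (C * a ^ m) fun y => a * f y := by
  intro t ht
  have hset : {y | t ≤ a * f y} = {y | t / a ≤ f y} := by
    ext y
    simp only [Set.mem_ofPred_eq, div_le_iff₀' (pos_iff_ne_zero.2 ha)]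
  have hconst : C * (t / a) ^ (-m) = C * a ^ m * t ^ (-m) := by
    rw [NNReal.div_rpow, NNReal.rpow_neg a, div_inv_eq_mul]
    ring
  rw [hset, ← hconst]
  exact hf _ (div_ne_zero ht ha)

theorem le_tsum_dyadic {φ : ℝ≥0 → ℝ≥0} (hφ : Monotone φ) (hφ0 : φ 0 = 0) (z : ℝ≥0) :
    (φ z : ℝ≥0∞) ≤
      ∑' j : ℤ, {w : ℝ≥0 | 2 ^ j ≤ w}.indicator (fun _ => (φ (2 ^ (j + 1)) : ℝ≥0∞)) z := by
  rcases eq_or_ne z 0 with rfl | hz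
  · simp [hφ0]
  obtain ⟨j, hj, hj'⟩ := NNReal.exists_mem_Ico_zpow hz one_lt_two
  calc (φ z : ℝ≥0∞) ≤ φ (2 ^ (j + 1)) := by exact_mod_cast hφ hj'.le
    _ = {w : ℝ≥0 | 2 ^ j ≤ w}.indicator (fun _ => (φ (2 ^ (j + 1)) : ℝ≥0∞)) z := by
        rw [Set.indicator_of_mem (by exact hj)]
    _ ≤ _ := ENNReal.le_tsum j

theorem IsWeakLp.tsum_comp_le (hf : IsWeakLp m C f) {φ : ℝ≥0 → ℝ≥0} (hφ : Monotone φ)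
    (hφ0 : φ 0 = 0) :
    ∑' y, (φ (f y) : ℝ≥0∞) ≤
      C * ∑' j : ℤ, ((φ (2 ^ (j + 1)) * (2 ^ j) ^ (-m) : ℝ≥0) : ℝ≥0∞) := by
  calc ∑' y, (φ (f y) : ℝ≥0∞)
      ≤ ∑' y, ∑' j : ℤ,
          {w : ℝ≥0 | 2 ^ j ≤ w}.indicator (fun _ => (φ (2 ^ (j + 1)) : ℝ≥0∞)) (f y) :=
        ENNReal.tsum_le_tsum fun y => le_tsum_dyadic hφ hφ0 (f y)
    _ = ∑' j : ℤ, φ (2 ^ (j + 1)) * ({y | 2 ^ j ≤ f y}.encard : ℝ≥0∞) := by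
        rw [ENNReal.tsum_comm]
        refine tsum_congr fun j => ?_
        rw [← ENNReal.tsum_set_one, ← ENNReal.tsum_mul_left, mul_one,
          tsum_subtype {y | 2 ^ j ≤ f y} fun _ => (φ (2 ^ (j + 1)) : ℝ≥0∞)]
        rfl
    _ ≤ ∑' j : ℤ, φ (2 ^ (j + 1)) * ((C * (2 ^ j) ^ (-m) : ℝ≥0) : ℝ≥0∞) := by
        gcongr with j
        exact hf _ (zpow_ne_zero j two_ne_zero)
    _ = C * ∑' j : ℤ, ((φ (2 ^ (j + 1)) * (2 ^ j) ^ (-m) : ℝ≥0) : ℝ≥0∞) := by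
        rw [← ENNReal.tsum_mul_left]
        refine tsum_congr fun j => ?_
        push_cast
        ring

theorem summable_dyadic_min_rpow (hm : 1 < m) (hs : m < s) :
    Summable fun j : ℤ =>
      min ((2 : ℝ≥0) ^ (j + 1)) ((2 ^ (j + 1)) ^ s) * ((2 : ℝ≥0) ^ j) ^ (-m) := by
  have two_rpow_lt_one {a : ℝ} (ha : a < 0) : (2 : ℝ≥0) ^ a < 1 :=
    NNReal.rpow_lt_one_of_one_lt_of_neg one_lt_two ha
  have two_pow_rpow (n : ℕ) (a : ℝ) : ((2 : ℝ≥0) ^ n) ^ a = (2 ^ a) ^ n := by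
    rw [← NNReal.rpow_natCast, ← NNReal.rpow_natCast, ← NNReal.rpow_mul, ← NNReal.rpow_mul,
      mul_comm]
  refine Summable.of_nat_of_neg_add_one
    (NNReal.summable_of_le (fun n => ?_)
      ((NNReal.summable_geometric (two_rpow_lt_one (sub_neg.2 hm))).mul_left 2))
    (NNReal.summable_of_le (fun n => ?_)
      ((NNReal.summable_geometric (two_rpow_lt_one (sub_neg.2 hs))).mul_left (2 ^ m)))
  · refine (mul_le_mul_left (min_le_left _ _) _).trans_eq ?_
    rw [← Nat.cast_succ, zpow_natCast, zpow_natCast, two_pow_rpow, sub_eq_add_neg,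
      NNReal.rpow_add two_ne_zero, NNReal.rpow_one, pow_succ, mul_pow]
    ring
  · refine (mul_le_mul_left (min_le_right _ _) _).trans_eq ?_
    rw [neg_add_rev, neg_add_cancel_comm, zpow_neg, zpow_natCast, ← neg_add_rev, ← Nat.cast_succ,
      zpow_neg, zpow_natCast, NNReal.inv_rpow, NNReal.inv_rpow, NNReal.rpow_neg, inv_inv,
      two_pow_rpow, two_pow_rpow, sub_eq_add_neg, NNReal.rpow_add two_ne_zero, NNReal.rpow_neg,
      mul_pow, pow_succ, inv_pow]
    ring

/-- The constant, up to the weak-type constant of `f`, in the bound of `∑ min (f y) (f y ^ s)` for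
`f` in weak `ℓ^m` with `1 < m < s`. It comes from cutting the range of `f` into the dyadic shells
`[2 ^ j, 2 ^ (j + 1))`. -/
def dyadicConst (m s : ℝ) : ℝ≥0 :=
  ∑' j : ℤ, min ((2 : ℝ≥0) ^ (j + 1)) ((2 ^ (j + 1)) ^ s) * (2 ^ j) ^ (-m)

theorem IsWeakLp.tsum_min_rpow_le (hm : 1 < m) (hs : m < s) (hf : IsWeakLp m C f) :
    ∑' y, ((min (f y) (f y ^ s) : ℝ≥0) : ℝ≥0∞) ≤ C * dyadicConst m s := by
  have hs0 : 0 < s := by linarith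
  rw [dyadicConst, ENNReal.coe_tsum (summable_dyadic_min_rpow hm hs)]
  exact hf.tsum_comp_le (φ := fun z => min z (z ^ s))
    (monotone_id.min (NNReal.monotone_rpow_of_nonneg hs0.le)) (by simp)

end WeakType

section HardyLittlewoodSobolev

variable {X : Type*} {m r : ℝ} {C : ℝ≥0}

theorem mul_le_min_rpow_add_rpow {s r : ℝ} (h : s.HolderConjugate r) {y : ℝ≥0} (hy : y ≤ 1)
    (z : ℝ≥0) : z * y ≤ min z (z ^ s) + y ^ r := by
  rcases le_total z (z ^ s) with hz | hz
  · rw [min_eq_left hz]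
    exact le_add_right (mul_le_of_le_one_right' hy)
  · rw [min_eq_right hz]
    exact (NNReal.young_inequality_real z y h).trans (add_le_add
      (div_le_self zero_le (Real.one_le_toNNReal.2 h.lt.le))
      (div_le_self zero_le (Real.one_le_toNNReal.2 h.symm.lt.le)))

theorem IsWeakLp.tsum_mul_le_of_le_one {k h : X → ℝ≥0}
    (hm : 1 < m) (hr : (2 * m).HolderConjugate r) (hk : IsWeakLp m C k) (hh : ∀ y, h y ≤ 1) :
    ∑' y, ((k y * h y : ℝ≥0) : ℝ≥0∞) ≤
      C * dyadicConst m (2 * m) + ∑' y, ((h y ^ r : ℝ≥0) : ℝ≥0∞) :=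
  calc ∑' y, ((k y * h y : ℝ≥0) : ℝ≥0∞)
      ≤ ∑' y, ((min (k y) (k y ^ (2 * m)) + h y ^ r : ℝ≥0) : ℝ≥0∞) :=
        ENNReal.tsum_le_tsum fun y =>
          ENNReal.coe_le_coe.2 (mul_le_min_rpow_add_rpow hr (hh y) (k y))
    _ = ∑' y, ((min (k y) (k y ^ (2 * m)) : ℝ≥0) : ℝ≥0∞) + ∑' y, ((h y ^ r : ℝ≥0) : ℝ≥0∞) := by
        simp only [ENNReal.coe_add, ENNReal.tsum_add]
    _ ≤ C * dyadicConst m (2 * m) + ∑' y, ((h y ^ r : ℝ≥0) : ℝ≥0∞) := by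
        gcongr
        exact hk.tsum_min_rpow_le hm (by linarith)

theorem IsWeakLp.tsum_mul_le {k h : X → ℝ≥0} {t : ℝ≥0} (hm : 1 < m)
    (hr : (2 * m).HolderConjugate r) (hk : IsWeakLp m C k) (hh : ∀ y, h y ≤ t) :
    ∑' y, ((k y * h y : ℝ≥0) : ℝ≥0∞) ≤
      (t ^ (r - 1) : ℝ≥0) * (C * dyadicConst m (2 * m) + ∑' y, ((h y ^ r : ℝ≥0) : ℝ≥0∞)) := by
  rcases eq_or_ne t 0 with rfl | ht
  · simp [fun y => le_zero_iff.1 (hh y)]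
  -- The factor `t ^ (2 - 2 * r)` on `k` gives both terms on the right the same power of `t`.
  have hscaled := (hk.const_mul (a := t ^ (2 - 2 * r)) (by positivity)).tsum_mul_le_of_le_one
    hm hr (h := fun y => t⁻¹ * h y) fun y => by
      rw [inv_mul_le_iff₀ (pos_iff_ne_zero.2 ht), mul_one]; exact hh y
  have hleft : t ^ (2 * r - 1) * (t ^ (2 - 2 * r) * t⁻¹) = 1 := by
    rw [← NNReal.rpow_neg_one, ← NNReal.rpow_add ht, ← NNReal.rpow_add ht]
    ring_nf
    exact NNReal.rpow_zero t
  have hweak : t ^ (2 * r - 1) * (t ^ (2 - 2 * r)) ^ m = t ^ (r - 1) := by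
    rw [← NNReal.rpow_mul, ← NNReal.rpow_add ht]
    congr 1
    linear_combination - hr.mul_eq_add
  have hpow : t ^ (2 * r - 1) * t⁻¹ ^ r = t ^ (r - 1) := by
    rw [NNReal.inv_rpow, ← NNReal.rpow_neg, ← NNReal.rpow_add ht]
    congr 1
    ring
  calc ∑' y, ((k y * h y : ℝ≥0) : ℝ≥0∞)
      = (t ^ (2 * r - 1) : ℝ≥0) *
          ∑' y, ((t ^ (2 - 2 * r) * k y * (t⁻¹ * h y) : ℝ≥0) : ℝ≥0∞) := by
        rw [← ENNReal.tsum_mul_left]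
        refine tsum_congr fun y => ?_
        rw [← ENNReal.coe_mul, mul_mul_mul_comm, ← mul_assoc, hleft, one_mul]
    _ ≤ (t ^ (2 * r - 1) : ℝ≥0) * ((C * (t ^ (2 - 2 * r)) ^ m : ℝ≥0) * dyadicConst m (2 * m) +
          ∑' y, (((t⁻¹ * h y) ^ r : ℝ≥0) : ℝ≥0∞)) := by gcongr
    _ = (t ^ (r - 1) : ℝ≥0) * (C * dyadicConst m (2 * m) + ∑' y, ((h y ^ r : ℝ≥0) : ℝ≥0∞)) := by
        simp only [NNReal.mul_rpow, ENNReal.coe_mul, ENNReal.tsum_mul_left, mul_add]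
        congr 1
        · rw [← hweak, ENNReal.coe_mul]
          ring
        · rw [← hpow, ENNReal.coe_mul, mul_assoc]

/-- A kernel whose rows and columns all lie in weak `ℓ^m` with the same constant, the hypothesis
of the Hardy–Littlewood–Sobolev inequality. -/
def IsWeakKernel (m : ℝ) (C : ℝ≥0) (k : X → X → ℝ≥0) : Prop :=
  (∀ x, IsWeakLp m C (k x)) ∧ ∀ y, IsWeakLp m C fun x => k x y

theorem IsWeakKernel.swap {k : X → X → ℝ≥0} (hk : IsWeakKernel m C k) :
    IsWeakKernel m C fun x y => k y x :=
  ⟨hk.2, hk.1⟩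

open Classical in
theorem IsWeakKernel.tsum_tsum_le_of_le {k : X → X → ℝ≥0}
    (hm : 1 < m) (hr : (2 * m).HolderConjugate r) (hk : IsWeakKernel m C k) (h : X → ℝ≥0) :
    ∑' x, ∑' y, (if h y ≤ h x then ((k x y * h x * h y : ℝ≥0) : ℝ≥0∞) else 0) ≤
      (C * dyadicConst m (2 * m) + ∑' y, ((h y ^ r : ℝ≥0) : ℝ≥0∞)) *
        ∑' y, ((h y ^ r : ℝ≥0) : ℝ≥0∞) := by
  rw [← ENNReal.tsum_mul_left]
  refine ENNReal.tsum_le_tsum fun x => ?_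
  set g : X → ℝ≥0 := fun y => if h y ≤ h x then h y else 0 with hg
  have hgx (y : X) : g y ≤ h x := by
    simp only [hg]
    split_ifs with hy
    exacts [hy, zero_le]
  have hgh (y : X) : g y ≤ h y := by
    simp only [hg]
    split_ifs
    exacts [le_rfl, zero_le]
  calc ∑' y, (if h y ≤ h x then ((k x y * h x * h y : ℝ≥0) : ℝ≥0∞) else 0)
      = h x * ∑' y, ((k x y * g y : ℝ≥0) : ℝ≥0∞) := by
        rw [← ENNReal.tsum_mul_left]
        refine tsum_congr fun y => ?_
        simp only [hg]
        split_ifs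
        · push_cast
          ring
        · simp
    _ ≤ h x * ((h x ^ (r - 1) : ℝ≥0) *
          (C * dyadicConst m (2 * m) + ∑' y, ((g y ^ r : ℝ≥0) : ℝ≥0∞))) := by
        gcongr
        exact (hk.1 x).tsum_mul_le hm hr hgx
    _ ≤ h x * ((h x ^ (r - 1) : ℝ≥0) *
          (C * dyadicConst m (2 * m) + ∑' y, ((h y ^ r : ℝ≥0) : ℝ≥0∞))) := by
        gcongr with y
        · exact hr.symm.nonneg
        · exact hgh y
    _ = (C * dyadicConst m (2 * m) + ∑' y, ((h y ^ r : ℝ≥0) : ℝ≥0∞)) * (h x ^ r : ℝ≥0) := by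
        have hpow : h x * h x ^ (r - 1) = h x ^ r := by
          rw [← NNReal.rpow_one_add' (by simpa using hr.symm.ne_zero), add_sub_cancel]
        rw [← mul_assoc, ← ENNReal.coe_mul, hpow, mul_comm]

theorem IsWeakKernel.tsum_tsum_self_le {k : X → X → ℝ≥0}
    (hm : 1 < m) (hr : (2 * m).HolderConjugate r) (hk : IsWeakKernel m C k) (h : X → ℝ≥0) :
    ∑' x, ∑' y, ((k x y * h x * h y : ℝ≥0) : ℝ≥0∞) ≤
      2 * ((C * dyadicConst m (2 * m) + ∑' y, ((h y ^ r : ℝ≥0) : ℝ≥0∞)) *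
        ∑' y, ((h y ^ r : ℝ≥0) : ℝ≥0∞)) := by
  classical
  calc ∑' x, ∑' y, ((k x y * h x * h y : ℝ≥0) : ℝ≥0∞)
      ≤ ∑' x, ∑' y, ((if h y ≤ h x then ((k x y * h x * h y : ℝ≥0) : ℝ≥0∞) else 0) +
          if h x ≤ h y then ((k x y * h y * h x : ℝ≥0) : ℝ≥0∞) else 0) := by
        gcongr with x y
        rcases le_total (h x) (h y) with hxy | hxy
        · rw [if_pos hxy, mul_right_comm]
          exact le_add_self
        · rw [if_pos hxy]
          exact le_self_add
    _ = ∑' x, ∑' y, (if h y ≤ h x then ((k x y * h x * h y : ℝ≥0) : ℝ≥0∞) else 0) +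
        ∑' x, ∑' y, (if h y ≤ h x then ((k y x * h x * h y : ℝ≥0) : ℝ≥0∞) else 0) := by
        simp only [ENNReal.tsum_add]
        congr 1
        exact ENNReal.tsum_comm
    _ ≤ _ := by
        rw [two_mul]
        exact add_le_add (hk.tsum_tsum_le_of_le hm hr h) (hk.swap.tsum_tsum_le_of_le hm hr h)

theorem exists_eq_mul_of_tsum_rpow_le (hr : 0 < r) {f : X → ℝ≥0} {a : ℝ≥0}
    (hf : ∑' x, ((f x ^ r : ℝ≥0) : ℝ≥0∞) ≤ (a ^ r : ℝ≥0)) :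
    ∃ f₁ : X → ℝ≥0, (∀ x, f x = a * f₁ x) ∧ ∑' x, ((f₁ x ^ r : ℝ≥0) : ℝ≥0∞) ≤ 1 := by
  rcases eq_or_ne a 0 with rfl | ha
  · refine ⟨0, fun x => ?_, by simp [NNReal.zero_rpow hr.ne']⟩
    have hfx := (ENNReal.le_tsum x).trans hf
    simpa [NNReal.zero_rpow hr.ne', hr.ne'] using hfx
  · refine ⟨fun x => a⁻¹ * f x, fun x => (mul_inv_cancel_left₀ ha _).symm, ?_⟩
    simp only [NNReal.mul_rpow, ENNReal.coe_mul, ENNReal.tsum_mul_left]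
    calc ((a⁻¹ ^ r : ℝ≥0) : ℝ≥0∞) * ∑' x, ((f x ^ r : ℝ≥0) : ℝ≥0∞)
        ≤ (a⁻¹ ^ r : ℝ≥0) * (a ^ r : ℝ≥0) := by gcongr
      _ = 1 := by
        rw [← ENNReal.coe_mul, ← NNReal.mul_rpow, inv_mul_cancel₀ ha, NNReal.one_rpow,
          ENNReal.coe_one]

theorem tsum_max_rpow_le (f g : X → ℝ≥0) (hr : 0 ≤ r) :
    ∑' x, ((max (f x) (g x) ^ r : ℝ≥0) : ℝ≥0∞) ≤
      ∑' x, ((f x ^ r : ℝ≥0) : ℝ≥0∞) + ∑' x, ((g x ^ r : ℝ≥0) : ℝ≥0∞) := by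
  rw [← ENNReal.tsum_add]
  refine ENNReal.tsum_le_tsum fun x => ?_
  rw [(NNReal.monotone_rpow_of_nonneg hr).map_max, ← ENNReal.coe_add, ENNReal.coe_le_coe]
  exact max_le_add_of_nonneg zero_le zero_le

theorem IsWeakKernel.exists_tsum_tsum_le {k : X → X → ℝ≥0} (hm : 1 < m)
    (hr : (2 * m).HolderConjugate r) (hk : IsWeakKernel m C k) :
    ∃ B : ℝ≥0, ∀ (f g : X → ℝ≥0) (a b : ℝ≥0),
      ∑' x, ((f x ^ r : ℝ≥0) : ℝ≥0∞) ≤ (a ^ r : ℝ≥0) →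
      ∑' x, ((g x ^ r : ℝ≥0) : ℝ≥0∞) ≤ (b ^ r : ℝ≥0) →
      ∑' x, ∑' y, ((k x y * f x * g y : ℝ≥0) : ℝ≥0∞) ≤ (B * a * b : ℝ≥0) := by
  refine ⟨2 * ((C * dyadicConst m (2 * m) + 2) * 2), fun f g a b hf hg => ?_⟩
  obtain ⟨f₁, hf₁, hf₁sum⟩ := exists_eq_mul_of_tsum_rpow_le hr.symm.pos hf
  obtain ⟨g₁, hg₁, hg₁sum⟩ := exists_eq_mul_of_tsum_rpow_le hr.symm.pos hg
  set h : X → ℝ≥0 := fun x => max (f₁ x) (g₁ x)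
  have hhsum : ∑' x, ((h x ^ r : ℝ≥0) : ℝ≥0∞) ≤ 2 :=
    (tsum_max_rpow_le f₁ g₁ hr.symm.nonneg).trans
      ((add_le_add hf₁sum hg₁sum).trans_eq one_add_one_eq_two)
  calc ∑' x, ∑' y, ((k x y * f x * g y : ℝ≥0) : ℝ≥0∞)
      ≤ ∑' x, ∑' y, ((a * b : ℝ≥0) : ℝ≥0∞) * ((k x y * h x * h y : ℝ≥0) : ℝ≥0∞) := by
        gcongr with x y
        rw [← ENNReal.coe_mul, ENNReal.coe_le_coe, hf₁, hg₁]
        calc k x y * (a * f₁ x) * (b * g₁ y) = a * b * (k x y * f₁ x * g₁ y) := by ring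
          _ ≤ a * b * (k x y * h x * h y) := by
            gcongr
            exacts [le_max_left _ _, le_max_right _ _]
    _ = (a * b : ℝ≥0) * ∑' x, ∑' y, ((k x y * h x * h y : ℝ≥0) : ℝ≥0∞) := by
        simp only [ENNReal.tsum_mul_left]
    _ ≤ (a * b : ℝ≥0) * (2 * ((C * dyadicConst m (2 * m) + 2) * 2)) := by
        gcongr
        refine (hk.tsum_tsum_self_le hm hr h).trans ?_
        gcongr
    _ = (2 * ((C * dyadicConst m (2 * m) + 2) * 2) * a * b : ℝ≥0) := by
        push_cast
        ring

end HardyLittlewoodSobolev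

section WeakConvergence

variable {ι E : Type*} {l : Filter ι} [NormedAddCommGroup E] [NormedSpace ℝ E] {M : ℝ}

theorem tendsto_apply_zero_of_tendsto_of_weak {Λ : ι → E →L[ℝ] ℝ} {Λ₀ : E →L[ℝ] ℝ} {v : ι → E}
    (hΛ : Tendsto Λ l (𝓝 Λ₀)) (hv : ∀ i, ‖v i‖ ≤ M)
    (hweak : ∀ L : E →L[ℝ] ℝ, Tendsto (fun i => L (v i)) l (𝓝 0)) :
    Tendsto (fun i => Λ i (v i)) l (𝓝 0) := by
  have hsmall : Tendsto (fun i => (Λ i - Λ₀) (v i)) l (𝓝 0) := by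
    refine squeeze_zero_norm (fun i => (Λ i - Λ₀).le_opNorm_of_le (hv i)) ?_
    simpa using (tendsto_iff_norm_sub_tendsto_zero.1 hΛ).mul_const M
  simpa using hsmall.add (hweak Λ₀)

theorem tendsto_bilin_self_sub (Q : E →L[ℝ] E →L[ℝ] ℝ) {a v : ι → E} {w : E}
    (hv : ∀ i, ‖v i‖ ≤ M) (hweak : ∀ L : E →L[ℝ] ℝ, Tendsto (fun i => L (v i)) l (𝓝 0))
    (hav : Tendsto (fun i => a i - v i) l (𝓝 w)) :
    Tendsto (fun i => Q (a i) (a i) - Q (v i) (v i)) l (𝓝 (Q w w)) := by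
  have hleft : Tendsto (fun i => Q (a i - v i) (v i)) l (𝓝 0) :=
    tendsto_apply_zero_of_tendsto_of_weak ((Q.continuous.tendsto w).comp hav) hv hweak
  have hright : Tendsto (fun i => Q.flip (a i - v i) (v i)) l (𝓝 0) :=
    tendsto_apply_zero_of_tendsto_of_weak ((Q.flip.continuous.tendsto w).comp hav) hv hweak
  have hdiag : Tendsto (fun i => Q (a i - v i) (a i - v i)) l (𝓝 (Q w w)) :=
    (Q.continuous₂.tendsto (w, w)).comp (hav.prodMk_nhds hav)
  have hexpand (i : ι) : Q (a i - v i) (a i - v i) + Q (a i - v i) (v i) +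
      Q.flip (a i - v i) (v i) = Q (a i) (a i) - Q (v i) (v i) := by
    simp only [map_sub, sub_apply, ContinuousLinearMap.flip_apply]
    ring
  simpa only [hexpand, add_zero] using (hdiag.add hleft).add hright

end WeakConvergence

section Domination

variable {ι β : Type*} {l : Filter ι}

theorem tendsto_tsum_zero_of_le_mul_add {F V : ι → β → ℝ} {M : ℝ}
    (hF0 : ∀ i x, 0 ≤ F i x) (hV0 : ∀ i x, 0 ≤ V i x)
    (hV : ∀ i, Summable (V i)) (hVM : ∀ i, ∑' x, V i x ≤ M)
    (hF : ∀ x, Tendsto (fun i => F i x) l (𝓝 0))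
    (hdom : ∀ ε > 0, ∃ D : β → ℝ, Summable D ∧ ∀ i x, F i x ≤ ε * V i x + D x) :
    Tendsto (fun i => ∑' x, F i x) l (𝓝 0) := by
  refine tendsto_order.2 ⟨fun η hη => .of_forall fun i => hη.trans_le (tsum_nonneg (hF0 i)),
    fun η hη => ?_⟩
  obtain ⟨D, hD, hFD⟩ := hdom (η / (2 * (|M| + 1))) (by positivity)
  set ε := η / (2 * (|M| + 1)) with hε
  have hεM : ε * M ≤ η / 2 := by
    rw [hε, div_mul_eq_mul_div, div_le_div_iff₀ (by positivity) two_pos]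
    nlinarith [le_abs_self M]
  set T : ι → β → ℝ := fun i x => max (F i x - ε * V i x) 0
  have hTD (i : ι) (x : β) : ‖T i x‖ ≤ |D x| := by
    rw [Real.norm_of_nonneg (le_max_right _ _)]
    exact max_le ((sub_le_iff_le_add'.2 (hFD i x)).trans (le_abs_self _)) (abs_nonneg _)
  have hTF (i : ι) (x : β) : T i x ≤ F i x :=
    max_le (sub_le_self _ (mul_nonneg (by positivity) (hV0 i x))) (hF0 i x)
  have hFT (i : ι) (x : β) : F i x ≤ ε * V i x + T i x :=
    sub_le_iff_le_add'.1 (le_max_left _ _)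
  have hT0 : Tendsto (fun i => ∑' x, T i x) l (𝓝 0) := by
    simpa using tendsto_tsum_of_dominated_convergence hD.abs
      (fun x => squeeze_zero (fun i => le_max_right _ _) (fun i => hTF i x) (hF x))
      (.of_forall hTD)
  filter_upwards [hT0.eventually_lt_const (half_pos hη)] with i hi
  have hTsum : Summable (T i) := hD.abs.of_norm_bounded (hTD i)
  have hsum : Summable fun x => ε * V i x + T i x := ((hV i).mul_left ε).add hTsum
  calc ∑' x, F i x ≤ ∑' x, (ε * V i x + T i x) :=
        (hsum.of_nonneg_of_le (hF0 i) (hFT i)).tsum_le_tsum (hFT i) hsum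
    _ = ε * ∑' x, V i x + ∑' x, T i x := by
        rw [((hV i).mul_left ε).tsum_add hTsum, tsum_mul_left]
    _ < η / 2 + η / 2 := add_lt_add_of_le_of_lt
        ((mul_le_mul_of_nonneg_left (hVM i) (by positivity)).trans hεM) hi
    _ = η := add_halves η

end Domination

section LpSequences

variable {ι X : Type*} {l : Filter ι} {r : ℝ≥0∞} [Fact (1 ≤ r)]

theorem tendsto_tsum_zero_of_le_mul_norm_rpow_add (hr : r ≠ ∞) {F : ι → X → ℝ}
    {V : ι → lp (fun _ : X => ℝ) r} {M : ℝ} (hF0 : ∀ i x, 0 ≤ F i x) (hVM : ∀ i, ‖V i‖ ≤ M)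
    (hF : ∀ x, Tendsto (fun i => F i x) l (𝓝 0))
    (hdom : ∀ ε > 0, ∃ D : X → ℝ, Summable D ∧ ∀ i x, F i x ≤ ε * ‖V i x‖ ^ r.toReal + D x) :
    Tendsto (fun i => ∑' x, F i x) l (𝓝 0) := by
  have hr0 : 0 < r.toReal := (ENNReal.toReal_pos_iff_ne_top r).2 hr
  refine tendsto_tsum_zero_of_le_mul_add (M := M ^ r.toReal) hF0 (fun i x => by positivity)
    (fun i => (lp.memℓp (V i)).summable hr0) (fun i => ?_) hF hdom
  rw [← lp.norm_rpow_eq_tsum hr0]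
  exact Real.rpow_le_rpow (norm_nonneg _) (hVM i) hr0.le

theorem hasSum_dual_apply [DecidableEq X] (hr : r ≠ ∞) (L : lp (fun _ : X => ℝ) r →L[ℝ] ℝ)
    (v : lp (fun _ : X => ℝ) r) : HasSum (fun x => v x * L (lp.single r x 1)) (L v) := by
  have hsingle (x : X) : L (lp.single r x (v x)) = v x * L (lp.single r x 1) := by
    rw [← smul_eq_mul, ← map_smul, ← lp.single_smul, smul_eq_mul, mul_one]
  simpa only [hsingle] using (lp.hasSum_single hr v).mapL L

theorem sum_norm_dual_single_rpow_le [DecidableEq X] {s : ℝ} (hrs : r.toReal.HolderConjugate s)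
    (L : lp (fun _ : X => ℝ) r →L[ℝ] ℝ) (T : Finset X) :
    ∑ x ∈ T, ‖L (lp.single r x 1)‖ ^ s ≤ ‖L‖ ^ s := by
  obtain ⟨g, hg1, hg⟩ :=
    (NNReal.isGreatest_Lp T (fun x => ‖L (lp.single r x 1)‖₊) hrs.symm).1
  set f : X → ℝ := fun x => SignType.sign (L (lp.single r x 1)) * (g x : ℝ)
  set F : lp (fun _ : X => ℝ) r := ∑ x ∈ T, lp.single r x (f x) with hF
  have hfg (x : X) : ‖f x‖ ≤ g x := by
    rw [norm_mul, NNReal.norm_eq]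
    refine mul_le_of_le_one_left (g x).2 ?_
    rcases lt_trichotomy (L (lp.single r x 1)) 0 with h | h | h <;> simp [h]
  have hFnorm : ‖F‖ ≤ 1 := by
    rw [← Real.rpow_le_rpow_iff (norm_nonneg F) zero_le_one hrs.pos, Real.one_rpow, hF,
      lp.norm_sum_single hrs.pos]
    refine (Finset.sum_le_sum fun x _ => ?_).trans
      (by exact_mod_cast hg1 : ∑ x ∈ T, (g x : ℝ) ^ r.toReal ≤ 1)
    exact Real.rpow_le_rpow (norm_nonneg _) (hfg x) hrs.nonneg
  have hLF : L F = (∑ x ∈ T, ‖L (lp.single r x 1)‖ ^ s) ^ (1 / s) := by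
    have hsingle (x : X) : L (lp.single r x (f x)) = ‖L (lp.single r x 1)‖ * g x := by
      rw [← mul_one (f x), ← smul_eq_mul, lp.single_smul, map_smul, smul_eq_mul, mul_right_comm,
        sign_mul_self, Real.norm_eq_abs]
    rw [hF, map_sum, Finset.sum_congr rfl fun x _ => hsingle x]
    simpa using congrArg NNReal.toReal hg
  have hle : (∑ x ∈ T, ‖L (lp.single r x 1)‖ ^ s) ^ (1 / s) ≤ ‖L‖ :=
    hLF ▸ (le_abs_self _).trans (L.unit_le_opNorm F hFnorm)
  rwa [one_div, Real.rpow_inv_le_iff_of_pos (by positivity) (norm_nonneg L) hrs.symm.pos] at hle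

theorem exists_mul_le_mul_rpow_add_mul_rpow {p q : ℝ} (hpq : p.HolderConjugate q) {ε : ℝ}
    (hε : 0 < ε) : ∃ C : ℝ, ∀ a b : ℝ, 0 ≤ a → 0 ≤ b → a * b ≤ ε * a ^ p + C * b ^ q := by
  set δ := ε ^ p⁻¹
  have hδ : 0 < δ := Real.rpow_pos_of_pos hε _
  have hδp : δ ^ p = ε := Real.rpow_inv_rpow hε.le hpq.ne_zero
  refine ⟨(δ⁻¹) ^ q, fun a b ha hb => ?_⟩
  calc a * b = (δ * a) * (δ⁻¹ * b) := by field_simp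
    _ ≤ (δ * a) ^ p / p + (δ⁻¹ * b) ^ q / q :=
      Real.young_inequality_of_nonneg (by positivity) (by positivity) hpq
    _ ≤ (δ * a) ^ p + (δ⁻¹ * b) ^ q := by
      gcongr
      · exact div_le_self (by positivity) hpq.lt.le
      · exact div_le_self (by positivity) hpq.symm.lt.le
    _ = ε * a ^ p + (δ⁻¹) ^ q * b ^ q := by
      rw [Real.mul_rpow hδ.le ha, Real.mul_rpow (by positivity) hb, hδp]

theorem tendsto_dual_apply_of_tendsto_apply {v : ι → lp (fun _ : X => ℝ) r} {M : ℝ}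
    (hr : 1 < r) (hr' : r ≠ ∞) (hv : ∀ i, ‖v i‖ ≤ M) (hv0 : ∀ x, Tendsto (fun i => v i x) l (𝓝 0))
    (L : lp (fun _ : X => ℝ) r →L[ℝ] ℝ) : Tendsto (fun i => L (v i)) l (𝓝 0) := by
  classical
  have hr1 : 1 < r.toReal := by simpa using ENNReal.toReal_strict_mono hr' hr
  have hrs := Real.HolderConjugate.conjExponent hr1
  set c : X → ℝ := fun x => L (lp.single r x 1)
  have hc : Summable fun x => ‖c x‖ ^ r.toReal.conjExponent :=
    summable_of_sum_le (fun x => by positivity) (sum_norm_dual_single_rpow_le hrs L)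
  have hF : Tendsto (fun i => ∑' x, ‖v i x‖ * ‖c x‖) l (𝓝 0) := by
    refine tendsto_tsum_zero_of_le_mul_norm_rpow_add hr' (fun i x => by positivity) hv
      (fun x => by simpa using (hv0 x).norm.mul_const ‖c x‖) fun ε hε => ?_
    obtain ⟨C, hC⟩ := exists_mul_le_mul_rpow_add_mul_rpow hrs hε
    exact ⟨fun x => C * ‖c x‖ ^ r.toReal.conjExponent, hc.mul_left C,
      fun i x => hC _ _ (norm_nonneg _) (norm_nonneg _)⟩
  refine squeeze_zero_norm (fun i => ?_) hF
  have hLv := hasSum_dual_apply hr' L (v i)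
  simp only [← norm_mul, ← hLv.tsum_eq]
  exact norm_tsum_le_tsum_norm hLv.summable.norm

end LpSequences

section BrezisLieb

variable {ι X E : Type*} {l : Filter ι} {r : ℝ≥0∞} [SeminormedAddCommGroup E] {p : ℝ}

theorem exists_abs_norm_add_rpow_sub_le (hp : 0 < p) {ε : ℝ} (hε : 0 < ε) :
    ∃ C : ℝ, 0 ≤ C ∧ ∀ a b : E, |‖a + b‖ ^ p - ‖a‖ ^ p| ≤ ε * ‖a‖ ^ p + C * ‖b‖ ^ p := by
  obtain ⟨δ, hδ, hcont⟩ := Metric.continuousAt_iff.1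
    (Real.continuousAt_rpow_const 1 p (.inr hp.le)) ε hε
  have hδ' : 0 < 1 + δ⁻¹ := by positivity
  refine ⟨(1 + δ⁻¹) ^ p, by positivity, fun a b => ?_⟩
  rcases le_or_gt (δ * ‖a‖) ‖b‖ with hba | hba
  · have ha : ‖a‖ ≤ δ⁻¹ * ‖b‖ := (le_inv_mul_iff₀ hδ).2 hba
    have hx : ‖a‖ ≤ (1 + δ⁻¹) * ‖b‖ := by linarith [norm_nonneg b]
    have hy : ‖a + b‖ ≤ (1 + δ⁻¹) * ‖b‖ := by linarith [norm_add_le a b]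
    calc |‖a + b‖ ^ p - ‖a‖ ^ p| ≤ ((1 + δ⁻¹) * ‖b‖) ^ p :=
          abs_sub_le_of_nonneg_of_le (by positivity) (by gcongr) (by positivity) (by gcongr)
      _ = (1 + δ⁻¹) ^ p * ‖b‖ ^ p := Real.mul_rpow hδ'.le (norm_nonneg b)
      _ ≤ ε * ‖a‖ ^ p + (1 + δ⁻¹) ^ p * ‖b‖ ^ p := le_add_of_nonneg_left (by positivity)
  · have ha : 0 < ‖a‖ := pos_of_mul_pos_right ((norm_nonneg b).trans_lt hba) hδ.le
    have hratio : dist (‖a + b‖ / ‖a‖) 1 < δ := by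
      rw [Real.dist_eq, div_sub_one ha.ne', abs_div, abs_norm, div_lt_iff₀ ha]
      exact (by simpa using abs_norm_sub_norm_le (a + b) a : |‖a + b‖ - ‖a‖| ≤ ‖b‖).trans_lt hba
    have hpow := (hcont hratio).le
    rw [Real.one_rpow, Real.dist_eq, Real.div_rpow (norm_nonneg _) ha.le,
      div_sub_one (by positivity), abs_div, abs_of_pos (by positivity : 0 < ‖a‖ ^ p),
      div_le_iff₀ (by positivity)] at hpow
    exact hpow.trans (le_add_of_nonneg_right (by positivity))

theorem add_rpow_le_two_rpow_mul_add {s x y : ℝ} (hs : 0 ≤ s) (hx : 0 ≤ x) (hy : 0 ≤ y) :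
    (x + y) ^ s ≤ 2 ^ s * (x ^ s + y ^ s) :=
  calc (x + y) ^ s ≤ (2 * max x y) ^ s := by
        rw [two_mul]
        gcongr
        exacts [le_max_left x y, le_max_right x y]
    _ = 2 ^ s * max x y ^ s := Real.mul_rpow two_pos.le (le_max_of_le_left hx)
    _ ≤ 2 ^ s * (x ^ s + y ^ s) := by
        gcongr
        rcases max_choice x y with h | h <;> rw [h]
        · exact le_add_of_nonneg_right (by positivity)
        · exact le_add_of_nonneg_left (by positivity)

theorem exists_abs_norm_add_rpow_sub_sub_rpow_le (hp : 0 < p) {s : ℝ} (hs : 0 < s) {ε : ℝ}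
    (hε : 0 < ε) : ∃ C : ℝ, ∀ a b : E,
      |‖a + b‖ ^ p - ‖a‖ ^ p - ‖b‖ ^ p| ^ s ≤ ε * (‖a‖ ^ p) ^ s + C * (‖b‖ ^ p) ^ s := by
  set δ : ℝ := ε ^ s⁻¹ / 2
  have hδ : 0 < δ := by positivity
  have hδs : 2 ^ s * δ ^ s = ε := by
    rw [← Real.mul_rpow two_pos.le hδ.le, mul_div_cancel₀ _ two_ne_zero,
      Real.rpow_inv_rpow hε.le hs.ne']
  obtain ⟨C, hC, hab⟩ := exists_abs_norm_add_rpow_sub_le (E := E) hp hδ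
  refine ⟨2 ^ s * (C + 1) ^ s, fun a b => ?_⟩
  have hdiff : |‖a + b‖ ^ p - ‖a‖ ^ p - ‖b‖ ^ p| ≤ δ * ‖a‖ ^ p + (C + 1) * ‖b‖ ^ p :=
    calc |‖a + b‖ ^ p - ‖a‖ ^ p - ‖b‖ ^ p|
        ≤ |‖a + b‖ ^ p - ‖a‖ ^ p| + |‖b‖ ^ p| := abs_sub _ _
      _ ≤ δ * ‖a‖ ^ p + C * ‖b‖ ^ p + ‖b‖ ^ p := by
        rw [abs_of_nonneg (by positivity : 0 ≤ ‖b‖ ^ p)]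
        gcongr
        exact hab a b
      _ = δ * ‖a‖ ^ p + (C + 1) * ‖b‖ ^ p := by ring
  calc |‖a + b‖ ^ p - ‖a‖ ^ p - ‖b‖ ^ p| ^ s
      ≤ (δ * ‖a‖ ^ p + (C + 1) * ‖b‖ ^ p) ^ s := by gcongr
    _ ≤ 2 ^ s * ((δ * ‖a‖ ^ p) ^ s + ((C + 1) * ‖b‖ ^ p) ^ s) :=
        add_rpow_le_two_rpow_mul_add hs.le (by positivity) (by positivity)
    _ = ε * (‖a‖ ^ p) ^ s + 2 ^ s * (C + 1) ^ s * (‖b‖ ^ p) ^ s := by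
        rw [Real.mul_rpow hδ.le (by positivity), Real.mul_rpow (by positivity) (by positivity),
          ← hδs]
        ring

theorem tendsto_norm_rpow_sub_norm_rpow [Fact (1 ≤ r)] (hr : r ≠ ∞) (hp : 0 < p)
    {U : ι → X → E} {u : X → E} {P V : ι → lp (fun _ : X => ℝ) r} {W : lp (fun _ : X => ℝ) r}
    {M : ℝ} (hP : ∀ i x, P i x = ‖U i x‖ ^ p) (hV : ∀ i x, V i x = ‖U i x - u x‖ ^ p)
    (hW : ∀ x, W x = ‖u x‖ ^ p) (hVM : ∀ i, ‖V i‖ ≤ M)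
    (hU : ∀ x, Tendsto (fun i => U i x) l (𝓝 (u x))) :
    Tendsto (fun i => P i - V i) l (𝓝 W) := by
  have hr0 : 0 < r.toReal := (ENNReal.toReal_pos_iff_ne_top r).2 hr
  rw [tendsto_iff_norm_sub_tendsto_zero]
  suffices hpow : Tendsto (fun i => ‖P i - V i - W‖ ^ r.toReal) l (𝓝 0) by
    simpa [hr0.ne'] using hpow.rpow_const (p := r.toReal⁻¹) (.inr (by positivity))
  have hcoe (i : ι) (x : X) :
      ‖(P i - V i - W) x‖ = |‖U i x‖ ^ p - ‖U i x - u x‖ ^ p - ‖u x‖ ^ p| := by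
    rw [← hP, ← hV, ← hW]
    rfl
  simp only [lp.norm_rpow_eq_tsum hr0, hcoe]
  refine tendsto_tsum_zero_of_le_mul_norm_rpow_add hr (fun i x => by positivity) hVM
    (fun x => ?_) fun ε hε => ?_
  · have hlim := ((((hU x).norm.rpow_const (.inr hp.le)).sub
      (((hU x).sub_const (u x)).norm.rpow_const (.inr hp.le))).sub_const (‖u x‖ ^ p)).abs
    simpa [hp.ne', hr0.ne'] using hlim.rpow_const (.inr hr0.le)
  · obtain ⟨C, hC⟩ := exists_abs_norm_add_rpow_sub_sub_rpow_le (E := E) hp hr0 hε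
    refine ⟨fun x => C * ‖W x‖ ^ r.toReal, ((lp.memℓp W).summable hr0).mul_left C, fun i x => ?_⟩
    simp only [hV, hW, Real.norm_rpow_of_nonneg (norm_nonneg _), norm_norm]
    simpa using hC (U i x - u x) (u x)

end BrezisLieb

section BilinearForm

variable {X : Type*} {m : ℝ} {C : ℝ≥0} {r : ℝ≥0∞} [Fact (1 ≤ r)]

theorem tsum_nnnorm_rpow (hr : 0 < r.toReal) (f : lp (fun _ : X => ℝ) r) :
    ∑' x, ((‖f x‖₊ ^ r.toReal : ℝ≥0) : ℝ≥0∞) = (‖f‖₊ ^ r.toReal : ℝ≥0) :=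
  (ENNReal.hasSum_coe.2 (NNReal.hasSum_coe.1 (by simpa using lp.hasSum_norm hr f))).tsum_eq

theorem IsWeakKernel.exists_tsum_norm_le {K : X → X → ℝ} (hm : 1 < m)
    (hr : (2 * m).HolderConjugate r.toReal) (hK : IsWeakKernel m C fun x y => ‖K x y‖₊) :
    ∃ B : ℝ, ∀ f g : lp (fun _ : X => ℝ) r,
      Summable (fun z : X × X => ‖K z.1 z.2 * f z.1 * g z.2‖) ∧
        ∑' z : X × X, ‖K z.1 z.2 * f z.1 * g z.2‖ ≤ B * ‖f‖ * ‖g‖ := by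
  obtain ⟨B, hB⟩ := hK.exists_tsum_tsum_le hm hr
  refine ⟨B, fun f g => ?_⟩
  have hle : ∑' z : X × X, (‖K z.1 z.2 * f z.1 * g z.2‖₊ : ℝ≥0∞) ≤ (B * ‖f‖₊ * ‖g‖₊ : ℝ≥0) := by
    rw [ENNReal.tsum_prod (f := fun x y => (‖K x y * f x * g y‖₊ : ℝ≥0∞))]
    simpa only [nnnorm_mul] using hB _ _ _ _ (tsum_nnnorm_rpow hr.symm.pos f).le
      (tsum_nnnorm_rpow hr.symm.pos g).le
  have hsum := ENNReal.tsum_coe_ne_top_iff_summable.1 (ne_top_of_le_ne_top ENNReal.coe_ne_top hle)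
  rw [← ENNReal.coe_tsum hsum, ENNReal.coe_le_coe] at hle
  exact ⟨NNReal.summable_coe.2 hsum, by
    simpa only [NNReal.coe_tsum, NNReal.coe_mul, coe_nnnorm] using NNReal.coe_le_coe.2 hle⟩

theorem IsWeakKernel.exists_hasSum_bilin {K : X → X → ℝ} (hm : 1 < m)
    (hr : (2 * m).HolderConjugate r.toReal) (hK : IsWeakKernel m C fun x y => ‖K x y‖₊) :
    ∃ Q : lp (fun _ : X => ℝ) r →L[ℝ] lp (fun _ : X => ℝ) r →L[ℝ] ℝ,
      ∀ f g, HasSum (fun z : X × X => K z.1 z.2 * f z.1 * g z.2) (Q f g) := by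
  obtain ⟨B, hB⟩ := hK.exists_tsum_norm_le hm hr
  have hsum (f g : lp (fun _ : X => ℝ) r) :
      Summable fun z : X × X => K z.1 z.2 * f z.1 * g z.2 := (hB f g).1.of_norm
  let Q₀ : lp (fun _ : X => ℝ) r →ₗ[ℝ] lp (fun _ : X => ℝ) r →ₗ[ℝ] ℝ :=
    LinearMap.mk₂ ℝ (fun f g => ∑' z : X × X, K z.1 z.2 * f z.1 * g z.2)
      (fun f f' g => ?_) (fun c f g => ?_) (fun f g g' => ?_) (fun c f g => ?_)
  · exact ⟨Q₀.mkContinuous₂ B fun f g => (norm_tsum_le_tsum_norm (hB f g).1).trans (hB f g).2,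
      fun f g => (hsum f g).hasSum⟩
  · rw [← (hsum f g).tsum_add (hsum f' g)]
    exact tsum_congr fun z => by rw [lp.coeFn_add, Pi.add_apply]; ring
  · rw [smul_eq_mul, ← tsum_mul_left]
    exact tsum_congr fun z => by rw [lp.coeFn_smul, Pi.smul_apply, smul_eq_mul]; ring
  · rw [← (hsum f g).tsum_add (hsum f g')]
    exact tsum_congr fun z => by rw [lp.coeFn_add, Pi.add_apply]; ring
  · rw [smul_eq_mul, ← tsum_mul_left]
    exact tsum_congr fun z => by rw [lp.coeFn_smul, Pi.smul_apply, smul_eq_mul]; ring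

end BilinearForm

section Powers

variable {X : Type*} {r : ℝ≥0∞} {p : ℝ}

theorem exists_lp_eq_abs_rpow (hp : 0 < p) (hr : 0 < r.toReal) {f : X → ℝ}
    (hf : Memlp (p * r.toReal) f) :
    ∃ F : lp (fun _ : X => ℝ) r, (∀ x, F x = |f x| ^ p) ∧ ‖F‖ = lpNorm (p * r.toReal) f ^ p := by
  have hpow (x : X) : ‖|f x| ^ p‖ ^ r.toReal = |f x| ^ (p * r.toReal) := by
    rw [Real.norm_of_nonneg (by positivity), ← Real.rpow_mul (abs_nonneg _)]
  refine ⟨⟨fun x => |f x| ^ p, memℓp_gen (by simpa only [hpow, Memlp] using hf)⟩, fun x => rfl, ?_⟩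
  simp only [lp.norm_eq_tsum_rpow hr, hpow, lpNorm]
  rw [← Real.rpow_mul (tsum_nonneg fun x => by positivity)]
  congr 1
  field_simp

theorem exists_lp_eq_of_tendsto [Fact (1 ≤ r)] {ι : Type*} {l : Filter ι} [l.NeBot]
    {P : ι → lp (fun _ : X => ℝ) r} {M : ℝ} {w : X → ℝ} (hM : ∀ i, ‖P i‖ ≤ M)
    (hP : ∀ x, Tendsto (fun i => P i x) l (𝓝 (w x))) :
    ∃ W : lp (fun _ : X => ℝ) r, ∀ x, W x = w x :=
  ⟨⟨w, lp.memℓp_of_tendsto (F := P) (l := l)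
    (isBounded_iff_forall_norm_le.2 ⟨M, Set.forall_mem_range.2 hM⟩) (tendsto_pi_nhds.2 hP)⟩,
    fun _ => rfl⟩

theorem exists_lp_eq_norm_sub_rpow {E : Type*} [SeminormedAddCommGroup E] [Fact (1 ≤ r)]
    (hp : 0 < p) : ∃ C : ℝ, ∀ (f u : X → E) (F W : lp (fun _ : X => ℝ) r),
      (∀ x, F x = ‖f x‖ ^ p) → (∀ x, W x = ‖u x‖ ^ p) →
      ∃ V : lp (fun _ : X => ℝ) r, (∀ x, V x = ‖f x - u x‖ ^ p) ∧ ‖V‖ ≤ 2 * ‖F‖ + C * ‖W‖ := by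
  obtain ⟨C, hC, hab⟩ := exists_abs_norm_add_rpow_sub_le (E := E) hp one_pos
  refine ⟨C, fun f u F W hF hW => ?_⟩
  have hle (x : X) : ‖‖f x - u x‖ ^ p‖ ≤ ‖((2 : ℝ) • F + C • W) x‖ := by
    have h := (abs_le.1 (hab (f x) (-u x))).2
    rw [norm_neg, ← sub_eq_add_neg] at h
    rw [Real.norm_of_nonneg (by positivity)]
    refine le_trans ?_ (le_abs_self _)
    simp only [lp.coeFn_add, lp.coeFn_smul, Pi.add_apply, Pi.smul_apply, smul_eq_mul, hF, hW]
    linarith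
  refine ⟨⟨fun x => ‖f x - u x‖ ^ p, (lp.memℓp ((2 : ℝ) • F + C • W)).mono' hle⟩,
    fun x => rfl, ?_⟩
  calc _ ≤ ‖(2 : ℝ) • F + C • W‖ :=
        lp.norm_mono (zero_lt_one.trans_le (Fact.out : 1 ≤ r)).ne' hle
    _ ≤ ‖(2 : ℝ) • F‖ + ‖C • W‖ := norm_add_le _ _
    _ = 2 * ‖F‖ + C * ‖W‖ := by
        rw [norm_smul, norm_smul, Real.norm_two, Real.norm_of_nonneg hC]

end Powers

section NonlocalTerm

variable {X : Type*} [DecidableEq X] {p : ℝ}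

/-- The kernel `R` with its diagonal, which `conv` never sees, set to zero. -/
def offDiag (R : X → X → ℝ) (x y : X) : ℝ := if y = x then 0 else R x y

theorem Dterm_eq_of_hasSum {R : X → X → ℝ} {u : X → ℝ} {D : ℝ}
    (h : HasSum (fun z : X × X => offDiag R z.1 z.2 * |u z.1| ^ p * |u z.2| ^ p) D) :
    Dterm R p u = D := by
  rw [← h.tsum_eq, h.summable.tsum_prod]
  refine tsum_congr fun x => ?_
  rw [conv, ← tsum_mul_right]
  refine tsum_congr fun y => ?_
  simp only [offDiag, ite_mul, zero_mul, mul_right_comm]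

end NonlocalTerm

section WordMetric

variable [Group G] {S : Finset G} {N : ℕ} {α : ℝ} {R : G → G → ℝ}

theorem wordDist_comm (hS : ∀ s ∈ S, s⁻¹ ∈ S) (x y : G) : wordDist S x y = wordDist S y x := by
  have hinv {x y : G} {k : ℕ}
      (h : ∃ l : List G, (∀ g ∈ l, g ∈ S) ∧ l.length = k ∧ x⁻¹ * y = l.prod) :
      ∃ l : List G, (∀ g ∈ l, g ∈ S) ∧ l.length = k ∧ y⁻¹ * x = l.prod := by
    obtain ⟨l, hl, hlen, hprod⟩ := h
    refine ⟨(l.map (·⁻¹)).reverse, ?_, by simpa using hlen, ?_⟩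
    · simpa using fun g hg => by simpa using hS _ (hl _ hg)
    · rw [← List.prod_inv_reverse, ← hprod, mul_inv_rev, inv_inv]
  exact congrArg sInf (Set.ext fun k => ⟨hinv, hinv⟩)

theorem wordDist_eq_wordDist_one (S : Finset G) (x y : G) :
    wordDist S x y = wordDist S (y⁻¹ * x) 1 := by
  simp [wordDist]

theorem PolyGrowth.exists_encard_le (hg : PolyGrowth S N) :
    ∃ C : ℝ≥0, ∀ (x : G) (t : ℝ≥0), 1 ≤ t →
      ({y | (wordDist S x y : ℝ) ≤ t}.encard : ℝ≥0∞) ≤ (C * t ^ N : ℝ≥0) := by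
  obtain ⟨C₁, C₂, hC₁, hC₂, h⟩ := hg
  lift C₂ to ℝ≥0 using hC₂.le
  refine ⟨C₂, fun x t ht => ?_⟩
  obtain ⟨hlower, hupper⟩ := h t ht
  -- `ncard` is `0` on infinite sets, so it is the lower growth bound that makes balls finite.
  have hfin : (ball S (1 : G) t).Finite := Set.finite_of_ncard_pos <| by
    have : 0 < (t : ℝ) := by positivity
    exact_mod_cast (by positivity : 0 < C₁ * (t : ℝ) ^ N).trans_le hlower
  have hset : {y | (wordDist S x y : ℝ) ≤ t} =
      ((Equiv.inv G).trans (Equiv.mulRight x)) ⁻¹' ball S 1 t := by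
    ext y
    simp [wordDist_eq_wordDist_one S x y, ball]
  rw [hset, Set.encard_preimage_of_bijective (Equiv.bijective _), ← hfin.cast_ncard_eq]
  exact ENNReal.coe_le_coe.2 (by exact_mod_cast hupper)

theorem PolyGrowth.exists_isWeakLp (hg : PolyGrowth S N) {s : ℝ} (hs : 0 < s) (c : ℝ≥0) :
    ∃ C : ℝ≥0, ∀ (x : G) (f : G → ℝ≥0), (∀ y, f y ≤ c * (wordDist S x y : ℝ≥0) ^ (-s)) →
      IsWeakLp (N / s) C f := by
  obtain ⟨C, hC⟩ := hg.exists_encard_le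
  refine ⟨C * c ^ (N / s), fun x f hf t ht => ?_⟩
  set ρ := (c / t) ^ s⁻¹ with hρ
  have hdist {y : G} (hy : t ≤ f y) : 1 ≤ (wordDist S x y : ℝ≥0) ∧ wordDist S x y ≤ ρ := by
    have hty := hy.trans (hf y)
    -- At distance `0` the bound reads `f y ≤ c * 0 ^ (-s) = 0`.
    have hd : wordDist S x y ≠ 0 := fun h => ht <| le_zero_iff.1 <| by
      simpa [h, hs.ne'] using hty
    refine ⟨by exact_mod_cast Nat.one_le_iff_ne_zero.2 hd, ?_⟩
    rw [NNReal.rpow_neg, ← div_eq_mul_inv, le_div_comm₀ (pos_iff_ne_zero.2 ht)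
      (NNReal.rpow_pos (by exact_mod_cast Nat.pos_of_ne_zero hd))] at hty
    exact (NNReal.le_rpow_inv_iff hs).2 hty
  rcases {y | t ≤ f y}.eq_empty_or_nonempty with hempty | ⟨y, hy⟩
  · simp [hempty]
  calc ({y | t ≤ f y}.encard : ℝ≥0∞) ≤ ({y | (wordDist S x y : ℝ) ≤ ρ}.encard : ℝ≥0∞) := by
        gcongr with y
        exact fun hy => by exact_mod_cast (hdist hy).2
    _ ≤ (C * ρ ^ N : ℝ≥0) := hC x ρ ((hdist hy).1.trans (hdist hy).2)
    _ = (C * c ^ (N / s) * t ^ (-(N / s)) : ℝ≥0) := by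
        rw [hρ, ← NNReal.rpow_mul_natCast, inv_mul_eq_div, NNReal.div_rpow, NNReal.rpow_neg,
          mul_assoc, div_eq_mul_inv (c ^ _)]

theorem RieszKernel.exists_isWeakKernel [DecidableEq G] (hR : RieszKernel S N α R)
    (hS : ∀ s ∈ S, s⁻¹ ∈ S) (hg : PolyGrowth S N) (hα : α < N) :
    ∃ C : ℝ≥0, IsWeakKernel (N / (N - α)) C fun x y => ‖offDiag R x y‖₊ := by
  obtain ⟨hpos, c₁, c₂, -, hc₂, hbound⟩ := hR
  lift c₂ to ℝ≥0 using hc₂.le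
  have hle (x y : G) : ‖offDiag R x y‖₊ ≤ c₂ * (wordDist S x y : ℝ≥0) ^ (-(N - α)) := by
    rw [offDiag]
    split_ifs with hyx
    · simp
    · rw [← NNReal.coe_le_coe, coe_nnnorm, Real.norm_of_nonneg (hpos x y).le, neg_sub]
      exact_mod_cast (hbound x y (Ne.symm hyx)).2
  obtain ⟨C, hC⟩ := hg.exists_isWeakLp (sub_pos.2 hα) c₂
  exact ⟨C, fun x => hC x _ (hle x), fun y => hC y _ fun x => wordDist_comm hS x y ▸ hle x y⟩

end WordMetric

theorem brezis_lieb_nonlocal_general {ι X : Type*} [DecidableEq X] {l : Filter ι} {m r p : ℝ}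
    {C : ℝ≥0} {R : X → X → ℝ} (hm : 1 < m) (hr : (2 * m).HolderConjugate r)
    (hR : IsWeakKernel m C fun x y => ‖offDiag R x y‖₊) (hp : 0 < p)
    {U : ι → X → ℝ} {u : X → ℝ}
    (hbdd : ∃ M : ℝ, ∀ i, Memlp (p * r) (U i) ∧ lpNorm (p * r) (U i) ≤ M)
    (hptwise : ∀ x, Tendsto (fun i => U i x) l (𝓝 (u x))) :
    Tendsto (fun i => Dterm R p (U i) - Dterm R p (U i - u)) l (𝓝 (Dterm R p u)) := by
  rcases l.eq_or_neBot with rfl | hl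
  · exact tendsto_bot
  obtain ⟨M, hM⟩ := hbdd
  lift r to ℝ≥0 using hr.symm.nonneg
  have : Fact (1 ≤ (r : ℝ≥0∞)) := ⟨by exact_mod_cast hr.symm.lt.le⟩
  obtain ⟨Q, hQ⟩ := hR.exists_hasSum_bilin (r := r) hm hr
  have hQD {f : X → ℝ} {F : lp (fun _ : X => ℝ) r} (hF : ∀ x, F x = |f x| ^ p) :
      Dterm R p f = Q F F := Dterm_eq_of_hasSum (by simpa only [hF] using hQ F F)
  choose P hP hPnorm using fun i => exists_lp_eq_abs_rpow (r := r) hp hr.symm.pos (hM i).1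
  have hPM (i : ι) : ‖P i‖ ≤ M ^ p := by
    rw [hPnorm]
    exact Real.rpow_le_rpow (Real.rpow_nonneg (tsum_nonneg fun x => by positivity) _) (hM i).2 hp.le
  obtain ⟨W, hW⟩ : ∃ W : lp (fun _ : X => ℝ) r, ∀ x, W x = |u x| ^ p :=
    exists_lp_eq_of_tendsto hPM fun x => by
      simpa only [hP] using (hptwise x).abs.rpow_const (.inr hp.le)
  obtain ⟨A, hA⟩ := exists_lp_eq_norm_sub_rpow (X := X) (E := ℝ) (r := r) hp
  choose V hV hVnorm using fun i => hA (U i) u (P i) W (hP i) hW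
  have hVM (i : ι) : ‖V i‖ ≤ 2 * M ^ p + A * ‖W‖ := (hVnorm i).trans (by gcongr; exact hPM i)
  have hV0 (x : X) : Tendsto (fun i => V i x) l (𝓝 0) := by
    simpa [hV, hp.ne'] using ((hptwise x).sub_const (u x)).norm.rpow_const (.inr hp.le)
  have hPV : Tendsto (fun i => P i - V i) l (𝓝 W) :=
    tendsto_norm_rpow_sub_norm_rpow ENNReal.coe_ne_top hp hP hV hW hVM hptwise
  have hVD (i : ι) : Dterm R p (U i - u) = Q (V i) (V i) := hQD (hV i)
  simp only [hQD (hP _), hVD, hQD hW]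
  exact tendsto_bilin_self_sub Q hVM (tendsto_dual_apply_of_tendsto_apply
    (by exact_mod_cast hr.symm.lt) ENNReal.coe_ne_top hVM hV0) hPV

theorem brezis_lieb_nonlocal
    {G : Type*} [Group G] [Countable G] [DecidableEq G]
    (S : Finset G) (hSsymm : ∀ s ∈ S, s⁻¹ ∈ S)
    (hSgen : Subgroup.closure (S : Set G) = ⊤)
    (N : ℕ) (hN : 2 ≤ N) (hgrowth : PolyGrowth S N)
    (α : ℝ) (hα0 : 0 < α) (hαN : α < (N : ℝ))
    (R : G → G → ℝ) (hR : RieszKernel S N α R)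
    (p : ℝ) (hp : ((N : ℝ) + α) / (N : ℝ) < p)
    (U : ℕ → G → ℝ) (u : G → ℝ)
    (hbdd : ∃ C : ℝ, ∀ n, Memlp (2 * (N : ℝ) * p / ((N : ℝ) + α)) (U n) ∧
      lpNorm (2 * (N : ℝ) * p / ((N : ℝ) + α)) (U n) ≤ C)
    (hptwise : ∀ x, Tendsto (fun n => U n x) atTop (nhds (u x))) :
    Tendsto (fun n => Dterm R p (U n) - Dterm R p (U n - u)) atTop
      (nhds (Dterm R p u)) := by
  obtain ⟨C, hC⟩ := hR.exists_isWeakKernel hSsymm hgrowth hαN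
  have hd : 0 < N - α := sub_pos.2 hαN
  have hNα : 0 < N + α := by positivity
  have hm : 1 < N / (N - α) := (one_lt_div hd).2 (by linarith)
  have hr : (2 * (N / (N - α))).HolderConjugate (2 * N / (N + α)) :=
    Real.holderConjugate_iff.2 ⟨by linarith, by field_simp; ring⟩
  rw [mul_div_right_comm, mul_comm _ p] at hbdd
  exact brezis_lieb_nonlocal_general hm hr hC ((div_nonneg hNα.le N.cast_nonneg).trans_lt hp)
    hbdd hptwise

end Choquard
end
end
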